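/- Let p > q and θ ∈ (0, π/2). If h is a positive convex solution of det(∇²h + hσ) = f·h^{p-1}(h² + |∇h|²)^{(n+1-q)/2} in C_θ with ∇_μ h = cot θ · h on ∂C_θ, where f > 0 is smooth on C_θ, then the global Hessian bound reduces to the boundary double normal estimate: max_{C_θ} |∇²h| ≤ C · max_{∂C_θ} |∇²h(μ, μ)| + C, where C depends only on n, p, q, min_{C_θ} f, min_{C_θ} h, ‖f‖_{C²(C_θ)} and ‖h‖_{C⁰(C_θ)}. -/

import Mathlib

/- Formalization of statements from "The L_p dual Minkowski problem for capillary
hypersurfaces".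

We work in the ambient space `ℝ^{n+1}`.  The spherical cap `C_θ` is the part of the unit
sphere centred at `cos θ • e` (where `e = -E_{n+1}`) lying in the closed upper half-space.
Functions on `C_θ` are represented by ambient functions `h : Euc n → ℝ`; the intrinsic
(round-metric) gradient `∇h` and Hessian `∇²h` of the restriction of `h` to `C_θ` are
expressed through ambient derivatives (for tangential arguments these expressions depend
only on the restriction of `h` to the cap).  The quantity `det(∇²h + hσ)` is encoded as the
determinant of the endomorphism of `ℝ^{n+1}` acting as `∇²h + hσ` on the tangent space of
the cap and as the identity on the normal line. -/

open Real Set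
open scoped RealInnerProductSpace

noncomputable section

/-- Ambient Euclidean space `ℝ^{n+1}`. -/
abbrev Euc (n : ℕ) : Type := EuclideanSpace ℝ (Fin (n + 1))

/-- The unit vector `e = -E_{n+1}`. -/
def eVec (n : ℕ) : Euc n := -(EuclideanSpace.single (Fin.last n) (1 : ℝ))

/-- `ν(ξ) = ξ - cos θ • e`, the unit normal (at `ξ`) of the sphere containing the cap `C_θ`. -/
def sphNormal (n : ℕ) (θ : ℝ) (ξ : Euc n) : Euc n := ξ - Real.cos θ • eVec n

/-- The spherical cap `C_θ = {ξ ∈ closure ℝ^{n+1}_+ : |ξ - cos θ • e| = 1}`. -/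
def cap (n : ℕ) (θ : ℝ) : Set (Euc n) :=
  {ξ | 0 ≤ ξ (Fin.last n) ∧ ‖sphNormal n θ ξ‖ = 1}

/-- The boundary `∂C_θ`. -/
def capBdry (n : ℕ) (θ : ℝ) : Set (Euc n) :=
  {ξ | ξ (Fin.last n) = 0 ∧ ‖sphNormal n θ ξ‖ = 1}

/-- The outward unit conormal `μ` of `∂C_θ` in `C_θ` (at boundary points). -/
def conormal (n : ℕ) (θ : ℝ) (ξ : Euc n) : Euc n :=
  Real.cot θ • ξ + Real.sin θ • eVec n

/-- Orthogonal projection of `ℝ^{n+1}` onto the tangent space of the cap at `ξ`. -/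
def tproj (n : ℕ) (θ : ℝ) (ξ : Euc n) : Euc n →L[ℝ] Euc n :=
  ContinuousLinearMap.id ℝ (Euc n) - (innerSL ℝ (sphNormal n θ ξ)).smulRight (sphNormal n θ ξ)

/-- `X` is tangent to the cap at `ξ`. -/
def IsTangent (n : ℕ) (θ : ℝ) (ξ X : Euc n) : Prop :=
  ⟪X, sphNormal n θ ξ⟫ = 0

/-- Intrinsic (round-metric) gradient `∇h` of `h` on the cap. -/
def sgrad (n : ℕ) (θ : ℝ) (h : Euc n → ℝ) (ξ : Euc n) : Euc n :=
  tproj n θ ξ (gradient h ξ)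

/-- Intrinsic (round-metric) Hessian `∇²h(X,Y)` of `h` on the cap (tangential arguments). -/
def shess (n : ℕ) (θ : ℝ) (h : Euc n → ℝ) (ξ X Y : Euc n) : ℝ :=
  ⟪(fderiv ℝ (gradient h) ξ) X, Y⟫ - ⟪gradient h ξ, sphNormal n θ ξ⟫ * ⟪X, Y⟫

/-- Endomorphism representing the intrinsic Hessian `∇²h` on tangent vectors
(and vanishing on the normal line). -/
def thessOp (n : ℕ) (θ : ℝ) (h : Euc n → ℝ) (ξ : Euc n) : Euc n →L[ℝ] Euc n :=
  ((tproj n θ ξ).comp ((fderiv ℝ (gradient h) ξ).comp (tproj n θ ξ)))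
    - ⟪gradient h ξ, sphNormal n θ ξ⟫ • tproj n θ ξ

/-- Rank-one projection onto the normal direction at `ξ`. -/
def normalPart (n : ℕ) (θ : ℝ) (ξ : Euc n) : Euc n →L[ℝ] Euc n :=
  (innerSL ℝ (sphNormal n θ ξ)).smulRight (sphNormal n θ ξ)

/-- Endomorphism acting as `∇²h + hσ` on the tangent space and as the identity on the
normal line. -/
def hessOp (n : ℕ) (θ : ℝ) (h : Euc n → ℝ) (ξ : Euc n) : Euc n →L[ℝ] Euc n :=
  thessOp n θ h ξ + h ξ • tproj n θ ξ + normalPart n θ ξ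

/-- `det(∇²h + hσ)` at `ξ`. -/
def sdet (n : ℕ) (θ : ℝ) (h : Euc n → ℝ) (ξ : Euc n) : ℝ :=
  LinearMap.det (hessOp n θ h ξ).toLinearMap

/-- `h > 0` on the cap. -/
def PosOnCap (n : ℕ) (θ : ℝ) (h : Euc n → ℝ) : Prop := ∀ ξ ∈ cap n θ, 0 < h ξ

/-- Convexity of a solution: `∇²h + hσ > 0` on the cap. -/
def IsConvexSol (n : ℕ) (θ : ℝ) (h : Euc n → ℝ) : Prop :=
  ∀ ξ ∈ cap n θ, ∀ X : Euc n, IsTangent n θ ξ X → X ≠ 0 →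
    0 < shess n θ h ξ X X + h ξ * ⟪X, X⟫

/-- The right-hand side `f·h^{p-1}·(h² + |∇h|²)^{(n+1-q)/2}`. -/
def eqRHS (n : ℕ) (θ p q : ℝ) (f h : Euc n → ℝ) (ξ : Euc n) : ℝ :=
  f ξ * h ξ ^ (p - 1) * (h ξ ^ 2 + ‖sgrad n θ h ξ‖ ^ 2) ^ (((n : ℝ) + 1 - q) / 2)

/-- `h` solves `det(∇²h + hσ) = f·h^{p-1}(h² + |∇h|²)^{(n+1-q)/2}` in `C_θ`. -/
def SolvesEq (n : ℕ) (θ p q : ℝ) (f h : Euc n → ℝ) : Prop :=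
  ∀ ξ ∈ cap n θ, sdet n θ h ξ = eqRHS n θ p q f h ξ

/-- Robin boundary condition `∇_μ h = cot θ · h` on `∂C_θ`. -/
def RobinBC (n : ℕ) (θ : ℝ) (h : Euc n → ℝ) : Prop :=
  ∀ ξ ∈ capBdry n θ, ⟪sgrad n θ h ξ, conormal n θ ξ⟫ = Real.cot θ * h ξ

/-- `l(ξ) = sin²θ + cos θ·⟨ξ, e⟩`. -/
def lFun (n : ℕ) (θ : ℝ) (ξ : Euc n) : ℝ :=
  Real.sin θ ^ 2 + Real.cos θ * ⟪ξ, eVec n⟫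

/-- `‖f‖_{C⁰(C_θ)} ≤ K`. -/
def CZeroNormLe (n : ℕ) (θ : ℝ) (f : Euc n → ℝ) (K : ℝ) : Prop :=
  ∀ ξ ∈ cap n θ, |f ξ| ≤ K

/-- `‖f‖_{C¹(C_θ)} ≤ K`. -/
def COneNormLe (n : ℕ) (θ : ℝ) (f : Euc n → ℝ) (K : ℝ) : Prop :=
  CZeroNormLe n θ f K ∧ ∀ ξ ∈ cap n θ, ‖sgrad n θ f ξ‖ ≤ K

/-- `‖f‖_{C²(C_θ)} ≤ K`. -/
def CTwoNormLe (n : ℕ) (θ : ℝ) (f : Euc n → ℝ) (K : ℝ) : Prop :=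
  COneNormLe n θ f K ∧
    ∀ ξ ∈ cap n θ, ∀ X Y : Euc n, IsTangent n θ ξ X → IsTangent n θ ξ Y →
      |shess n θ f ξ X Y| ≤ K * ‖X‖ * ‖Y‖

/-- The linearized operator `L_h(γ)` of the equation `𝒢(∇²h,h) = 𝒥₁(∇h,h)` at `h`:
the derivative at `ε = 0` of `𝒢 - 𝒥₁` along the variation `h_ε = h·e^{εγ}`
(cf. equation (5.4) of the paper, which is exactly this derivative). -/
def linOp (n : ℕ) (θ p q : ℝ) (f h γ : Euc n → ℝ) (ξ : Euc n) : ℝ :=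
  deriv (fun ε : ℝ =>
    sdet n θ (fun x => h x * Real.exp (ε * γ x)) ξ
      - eqRHS n θ p q f (fun x => h x * Real.exp (ε * γ x)) ξ) 0

/-- Endomorphism acting as `l·∇²u + cos θ·(∇u ⊗ e^T + e^T ⊗ ∇u) + uσ` on the tangent space
and as the identity on the normal line. -/
def capillaryOp (n : ℕ) (θ : ℝ) (u : Euc n → ℝ) (ξ : Euc n) : Euc n →L[ℝ] Euc n :=
  lFun n θ ξ • thessOp n θ u ξ
    + Real.cos θ • ((innerSL ℝ (sgrad n θ u ξ)).smulRight (tproj n θ ξ (eVec n))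
        + (innerSL ℝ (tproj n θ ξ (eVec n))).smulRight (sgrad n θ u ξ))
    + u ξ • tproj n θ ξ + normalPart n θ ξ

/-- Endomorphism acting as `∇²v + ∇v ⊗ ∇v + σ` on the tangent space and as the identity on
the normal line. -/
def logOp (n : ℕ) (θ : ℝ) (v : Euc n → ℝ) (ξ : Euc n) : Euc n →L[ℝ] Euc n :=
  thessOp n θ v ξ + (innerSL ℝ (sgrad n θ v ξ)).smulRight (sgrad n θ v ξ)
    + tproj n θ ξ + normalPart n θ ξ

/-- Geodesic distance on `C_θ` from `ξ` to the top point `N = (0,…,0,1-cos θ)`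
(for `θ ∈ (0,π/2)` the cap is geodesically convex, so this is `arccos ⟨ν(ξ), ν(N)⟩`). -/
def distToTop (n : ℕ) (θ : ℝ) (ξ : Euc n) : ℝ :=
  Real.arccos (ξ (Fin.last n) + Real.cos θ)

/-- The function `d := d_N²/(2θ)`. -/
def dCap (n : ℕ) (θ : ℝ) (ξ : Euc n) : ℝ := distToTop n θ ξ ^ 2 / (2 * θ)

/-!
Central projection identifies the cap `C_θ` with the ball `‖y‖ ≤ tan θ` in `e^⊥`. The restriction
`u(y) = √(1 + ‖y‖²) h` of the 1-homogeneous extension of `h` to the hyperplane at height one has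
flat Hessian equal to `∇²h + hσ` up to a positive factor, so `u` is a convex solution of
`log det D²u = Γ₀ + P log u + γ log (|Du|² + (u - ⟨y, Du⟩)²)`, and the capillary condition becomes
`⟨y, Du⟩ = u` on the boundary sphere.

Maximize `log λ + β (½|Du|² + a (u - ⟨y, Du⟩))` over the ball, where `λ` is the largest eigenvalue
of `D²u`. At an interior maximum the third derivatives cancel, and the term `β λ tr D²u ≥ β λ²`
dominates the rest once `β` is large, which bounds `λ`. At a boundary maximum the Robin condition
makes `y` an eigenvector of `D²u`, and for `a ≥ u / ‖y‖²` the sign of the radial derivative of the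
test function bounds the tangential eigenvalues by the double normal one.
-/

open Filter Topology Module
open scoped Matrix ContDiff

section TwoJet

variable {E : Type*} [AddCommGroup E] [Module ℝ E]

/-- The second-order Taylor data of `f` at `y` in the direction `v`: the function
`t ↦ f (y + t • v)` is differentiable near `0`, with first derivative `b` and second
derivative `c` at `0`. -/
def HasTwoJetAt (f : E → ℝ) (v : E) (b c : ℝ) (y : E) : Prop :=
  ∃ f' : ℝ → ℝ, (∀ᶠ t in 𝓝 (0 : ℝ), HasDerivAt (fun t : ℝ => f (y + t • v)) (f' t) t) ∧
    f' 0 = b ∧ HasDerivAt f' c 0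

namespace HasTwoJetAt

variable {f g : E → ℝ} {v y : E} {b c b' c' : ℝ}

lemma hasDerivAt (h : HasTwoJetAt f v b c y) : HasDerivAt (fun t : ℝ => f (y + t • v)) b 0 := by
  obtain ⟨f', hf, rfl, -⟩ := h
  exact hf.self_of_nhds

lemma congr_jet (h : HasTwoJetAt f v b c y) (hb : b = b') (hc : c = c') :
    HasTwoJetAt f v b' c' y := hb ▸ hc ▸ h

lemma congr_of_eventuallyEq (h : HasTwoJetAt f v b c y)
    (hfg : ∀ᶠ t in 𝓝 (0 : ℝ), f (y + t • v) = g (y + t • v)) : HasTwoJetAt g v b c y := by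
  obtain ⟨f', hf, hb, hc⟩ := h
  refine ⟨f', ?_, hb, hc⟩
  filter_upwards [hf, hfg.eventually_nhds] with t ht hg
  exact ht.congr_of_eventuallyEq (EventuallyEq.symm hg)

lemma unique (h : HasTwoJetAt f v b c y) (h' : HasTwoJetAt f v b' c' y) : b = b' ∧ c = c' := by
  refine ⟨h.hasDerivAt.unique h'.hasDerivAt, ?_⟩
  obtain ⟨f', hf, -, hc⟩ := h
  obtain ⟨g', hg, -, hc'⟩ := h'
  have : f' =ᶠ[𝓝 0] g' := by
    filter_upwards [hf, hg] with t ht hg using ht.unique hg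
  exact hc.unique (hc'.congr_of_eventuallyEq this)

lemma const (a : ℝ) : HasTwoJetAt (fun _ : E => a) v 0 0 y :=
  ⟨fun _ => 0, Eventually.of_forall fun t => hasDerivAt_const t a, rfl, hasDerivAt_const _ _⟩

lemma add (hf : HasTwoJetAt f v b c y) (hg : HasTwoJetAt g v b' c' y) :
    HasTwoJetAt (fun x => f x + g x) v (b + b') (c + c') y := by
  obtain ⟨f', hf, rfl, hc⟩ := hf
  obtain ⟨g', hg, rfl, hc'⟩ := hg
  refine ⟨fun t => f' t + g' t, ?_, rfl, hc.add hc'⟩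
  filter_upwards [hf, hg] with t ht hg
  exact ht.add hg

lemma mul (hf : HasTwoJetAt f v b c y) (hg : HasTwoJetAt g v b' c' y) :
    HasTwoJetAt (fun x => f x * g x) v (b * g y + f y * b')
      (c * g y + 2 * (b * b') + f y * c') y := by
  have hf0 := hf.hasDerivAt
  have hg0 := hg.hasDerivAt
  obtain ⟨f', hf, rfl, hc⟩ := hf
  obtain ⟨g', hg, rfl, hc'⟩ := hg
  refine ⟨fun t => f' t * g (y + t • v) + f (y + t • v) * g' t, ?_, by simp, ?_⟩
  · filter_upwards [hf, hg] with t ht hg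
    exact ht.mul hg
  · refine ((hc.mul hg0).add (hf0.mul hc')).congr_deriv ?_
    simp only [zero_smul, add_zero]
    ring

lemma const_mul (a : ℝ) (hf : HasTwoJetAt f v b c y) :
    HasTwoJetAt (fun x => a * f x) v (a * b) (a * c) y :=
  ((const a).mul hf).congr_jet (by ring) (by ring)

lemma sub (hf : HasTwoJetAt f v b c y) (hg : HasTwoJetAt g v b' c' y) :
    HasTwoJetAt (fun x => f x - g x) v (b - b') (c - c') y := by
  simpa [sub_eq_add_neg] using hf.add (hg.const_mul (-1))

lemma sum {ι : Type*} (s : Finset ι) {f : ι → E → ℝ} {b c : ι → ℝ}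
    (hf : ∀ i ∈ s, HasTwoJetAt (f i) v (b i) (c i) y) :
    HasTwoJetAt (fun x => ∑ i ∈ s, f i x) v (∑ i ∈ s, b i) (∑ i ∈ s, c i) y := by
  classical
  induction s using Finset.induction_on with
  | empty => simpa using const 0
  | insert i s hi ih =>
    simp only [Finset.sum_insert hi]
    exact (hf i (by simp)).add (ih fun j hj => hf j (by simp [hj]))

lemma log (hf : HasTwoJetAt f v b c y) (h0 : f y ≠ 0) :
    HasTwoJetAt (fun x => Real.log (f x)) v (b / f y) (c / f y - b ^ 2 / f y ^ 2) y := by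
  have hf0 := hf.hasDerivAt
  have h0' : f (y + (0 : ℝ) • v) ≠ 0 := by simpa using h0
  obtain ⟨f', hf, rfl, hc⟩ := hf
  refine ⟨fun t => f' t / f (y + t • v), ?_, by simp, ?_⟩
  · filter_upwards [hf, hf0.continuousAt.eventually_ne h0'] with t ht hne
    exact ht.log hne
  · refine (hc.div hf0 h0').congr_deriv ?_
    simp only [zero_smul, add_zero]
    field_simp

/-- If the second derivative were positive, the point would also be a strict minimum, making `f`
locally constant. -/
lemma eq_zero_and_nonpos_of_isLocalMax (hf : HasTwoJetAt f v b c y)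
    (h : IsLocalMax (fun t : ℝ => f (y + t • v)) 0) : b = 0 ∧ c ≤ 0 := by
  have hb : b = 0 := h.hasDerivAt_eq_zero hf.hasDerivAt
  refine ⟨hb, not_lt.1 fun hc => ?_⟩
  have hcont := hf.hasDerivAt.continuousAt
  obtain ⟨f', hf', hb', hc'⟩ := hf
  have hderiv : deriv (fun t : ℝ => f (y + t • v)) =ᶠ[𝓝 0] f' := by
    filter_upwards [hf'] with t ht using ht.deriv
  have hmin : IsLocalMin (fun t : ℝ => f (y + t • v)) 0 := by
    apply isLocalMin_of_deriv_deriv_pos _ _ hcont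
    · rwa [hderiv.deriv_eq, hc'.deriv]
    · rw [hderiv.self_of_nhds, hb', hb]
  have hconst : (fun t : ℝ => f (y + t • v)) =ᶠ[𝓝 0] fun _ => f (y + (0 : ℝ) • v) := by
    filter_upwards [h, hmin] with t ht ht' using le_antisymm ht ht'
  have hzero : f' =ᶠ[𝓝 0] fun _ => 0 := hderiv.symm.trans (by simpa using hconst.deriv)
  exact hc.ne' (hc'.unique ((hasDerivAt_const _ _).congr_of_eventuallyEq hzero))

end HasTwoJetAt

end TwoJet

section LogDet

variable {ι : Type*} [Fintype ι] [DecidableEq ι]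

lemma hasDerivAt_matrix_det {M : ℝ → Matrix ι ι ℝ} {M' : Matrix ι ι ℝ} {t : ℝ}
    (hM : ∀ i j, HasDerivAt (fun t => M t i j) (M' i j) t) :
    HasDerivAt (fun t => (M t).det) ((M t).adjugate * M').trace t := by
  simp only [Matrix.det_apply']
  refine (HasDerivAt.fun_sum fun σ _ => (HasDerivAt.fun_finsetProd fun i _ =>
    hM (σ i) i).const_mul _).congr_deriv ?_
  have hcol (j : ι) : ((M t).adjugate * M') j j = ((M t).updateCol j (M'.col j)).det := by
    rw [← Matrix.cramer_apply, Matrix.cramer_eq_adjugate_mulVec]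
    rfl
  simp only [Matrix.trace, Matrix.diag_apply, hcol, Matrix.det_apply', Finset.mul_sum]
  rw [Finset.sum_comm]
  refine Finset.sum_congr rfl fun j _ => Finset.sum_congr rfl fun σ _ => ?_
  rw [← Finset.prod_erase_mul _ _ (Finset.mem_univ j)]
  have hprod : ∏ i ∈ Finset.univ.erase j, (M t).updateCol j (M'.col j) (σ i) i
      = ∏ i ∈ Finset.univ.erase j, M t (σ i) i :=
    Finset.prod_congr rfl fun i hi => by simp [(Finset.mem_erase.1 hi).1]
  simp [hprod]

attribute [local instance] Matrix.linftyOpNormedRing Matrix.linftyOpNormedAlgebra in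
lemma hasDerivAt_matrix_inv {M : ℝ → Matrix ι ι ℝ} {M' : Matrix ι ι ℝ} {t : ℝ}
    (hM : ∀ i j, HasDerivAt (fun t => M t i j) (M' i j) t) (ht : (M t).det ≠ 0) (i j : ι) :
    HasDerivAt (fun t => (M t)⁻¹ i j) ((-((M t)⁻¹ * M' * (M t)⁻¹)) i j) t := by
  have hu : IsUnit (M t) := (Matrix.isUnit_iff_isUnit_det _).2 ht.isUnit
  have hMt : HasDerivAt M M' t := hasDerivAt_pi.2 fun i => hasDerivAt_pi.2 (hM i)
  have hinv := HasFDerivAt.comp_hasDerivAt t (by exact hasFDerivAt_ringInverse (𝕜 := ℝ) hu.unit) hMt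
  have := hasDerivAt_pi.1 (hasDerivAt_pi.1 hinv i) j
  simpa [Function.comp_def, ← Matrix.nonsing_inv_eq_ringInverse] using this

lemma HasTwoJetAt.log_det {E : Type*} [AddCommGroup E] [Module ℝ E] {M : E → Matrix ι ι ℝ}
    {B C : Matrix ι ι ℝ} {v y : E} (hM : ∀ i j, HasTwoJetAt (fun x => M x i j) v (B i j) (C i j) y)
    (hy : (M y).det ≠ 0) :
    HasTwoJetAt (fun x => Real.log (M x).det) v ((M y)⁻¹ * B).trace
      (((M y)⁻¹ * C).trace - ((M y)⁻¹ * B * ((M y)⁻¹ * B)).trace) y := by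
  choose M' hM' hB hC using hM
  have hM'_all : ∀ᶠ t in 𝓝 (0 : ℝ), ∀ i j,
      HasDerivAt (fun t : ℝ => M (y + t • v) i j) (M' i j t) t :=
    eventually_all.2 fun i => eventually_all.2 (hM' i)
  have hdet0 : (M (y + (0 : ℝ) • v)).det ≠ 0 := by simpa using hy
  have hdet : ∀ᶠ t in 𝓝 (0 : ℝ), (M (y + t • v)).det ≠ 0 :=
    (hasDerivAt_matrix_det hM'_all.self_of_nhds).continuousAt.eventually_ne hdet0
  refine ⟨fun t => ((M (y + t • v))⁻¹ * Matrix.of fun i j => M' i j t).trace, ?_, ?_, ?_⟩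
  · filter_upwards [hM'_all, hdet] with t ht hne
    refine ((hasDerivAt_matrix_det ht).log hne).congr_deriv ?_
    rw [Matrix.inv_def, Matrix.smul_mul, Matrix.trace_smul, Ring.inverse_eq_inv', smul_eq_mul,
      div_eq_inv_mul]
    rfl
  · have : (Matrix.of fun i j => M' i j 0) = B := Matrix.ext hB
    simp [this]
  · have hB' : ∀ i j, HasDerivAt (fun t : ℝ => M (y + t • v) i j) (B i j) 0 := fun i j => by
      simpa only [hB] using hM'_all.self_of_nhds i j
    have hinv := hasDerivAt_matrix_inv hB' hdet0
    simp only [Matrix.trace, Matrix.diag_apply, Matrix.mul_apply (M := (M (y + _ • v))⁻¹)]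
    refine (HasDerivAt.fun_sum fun i _ => HasDerivAt.fun_sum fun j _ =>
      (hinv i j).mul (hC j i)).congr_deriv ?_
    simp only [zero_smul, add_zero, hB, Finset.sum_add_distrib, Matrix.neg_apply, neg_mul,
      Finset.sum_neg_distrib, ← Matrix.mul_apply, mul_assoc]
    ring

end LogDet

section DirDeriv

variable {E : Type*} [NormedAddCommGroup E] [NormedSpace ℝ E]

/-- The derivative of `f` in the direction `v`, as a function of the base point, so that
`dirDeriv v (dirDeriv w f)` is `D²f(v, w)`. -/
def dirDeriv (v : E) (f : E → ℝ) : E → ℝ := fun y => fderiv ℝ f y v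

variable {f : E → ℝ}

lemma dirDeriv_add (v w : E) (f : E → ℝ) (y : E) :
    dirDeriv (v + w) f y = dirDeriv v f y + dirDeriv w f y := map_add _ _ _

lemma dirDeriv_smul (a : ℝ) (v : E) (f : E → ℝ) (y : E) :
    dirDeriv (a • v) f y = a * dirDeriv v f y := map_smul _ _ _

lemma dirDeriv_sub_smul (x y : E) (a : ℝ) (f : E → ℝ) (z : E) :
    dirDeriv (x - a • y) f z = dirDeriv x f z - a * dirDeriv y f z := by
  simp [dirDeriv]

lemma contDiff_dirDeriv (hf : ContDiff ℝ ∞ f) (v : E) : ContDiff ℝ ∞ (dirDeriv v f) :=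
  (hf.fderiv_right (m := ∞) (by simp)).clm_apply contDiff_const

lemma dirDeriv_dirDeriv (hf : ContDiff ℝ ∞ f) (v w y : E) :
    dirDeriv v (dirDeriv w f) y = fderiv ℝ (fderiv ℝ f) y v w := by
  have hf' : DifferentiableAt ℝ (fderiv ℝ f) y :=
    (hf.fderiv_right (m := ∞) (by simp)).differentiable (by simp) y
  unfold dirDeriv
  rw [fderiv_clm_apply hf' (differentiableAt_const w)]
  simp

lemma dirDeriv_comm (hf : ContDiff ℝ ∞ f) (v w : E) :
    dirDeriv v (dirDeriv w f) = dirDeriv w (dirDeriv v f) := by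
  funext y
  rw [dirDeriv_dirDeriv hf, dirDeriv_dirDeriv hf]
  exact (hf.contDiffAt (x := y)).isSymmSndFDerivAt (by
    rw [minSmoothness_of_isRCLikeNormedField]
    exact WithTop.coe_le_coe.2 (le_top : (2 : ℕ∞) ≤ ⊤)) v w

lemma hasDerivAt_comp_dirDeriv (hf : Differentiable ℝ f) {c : ℝ → E} {c' : E} {t : ℝ}
    (hc : HasDerivAt c c' t) : HasDerivAt (fun t => f (c t)) (dirDeriv c' f (c t)) t :=
  (hf (c t)).hasFDerivAt.comp_hasDerivAt t hc

lemma hasDerivAt_line (hf : Differentiable ℝ f) (y v : E) (t : ℝ) :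
    HasDerivAt (fun t : ℝ => f (y + t • v)) (dirDeriv v f (y + t • v)) t :=
  hasDerivAt_comp_dirDeriv hf (by simpa using ((hasDerivAt_id t).smul_const v).const_add y)

lemma hasTwoJetAt_of_contDiff (hf : ContDiff ℝ ∞ f) (v y : E) :
    HasTwoJetAt f v (dirDeriv v f y) (dirDeriv v (dirDeriv v f) y) y :=
  ⟨fun t => dirDeriv v f (y + t • v), Eventually.of_forall fun t =>
    hasDerivAt_line (hf.differentiable (by simp)) y v t, by simp, by
    simpa using hasDerivAt_line ((contDiff_dirDeriv hf v).differentiable (by simp)) y v 0⟩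

lemma isLocalMax_line {y : E} (h : IsLocalMax f y) (v : E) :
    IsLocalMax (fun t : ℝ => f (y + t • v)) 0 :=
  IsLocalMax.comp_continuous (g := fun t : ℝ => y + t • v) (b := 0) (by simpa using h)
    (by fun_prop)

end DirDeriv

section HessianMatrix

variable {E : Type*} [NormedAddCommGroup E] [NormedSpace ℝ E] {ι : Type*}

/-- The Hessian matrix of `u` with respect to the family `v`. -/
def hessMatrix (u : E → ℝ) (v : ι → E) (y : E) : Matrix ι ι ℝ :=
  Matrix.of fun a b => dirDeriv (v a) (dirDeriv (v b) u) y

variable [DecidableEq ι] {u φ : E → ℝ} {v : ι → E} {y : E} {lam : ι → ℝ}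

lemma dirDeriv_dirDeriv_of_hessMatrix_eq_diagonal (h : hessMatrix u v y = Matrix.diagonal lam)
    (a b : ι) : dirDeriv (v a) (dirDeriv (v b) u) y = if a = b then lam a else 0 := by
  rw [← Matrix.diagonal_apply, ← h, hessMatrix, Matrix.of_apply]

variable [Fintype ι]

lemma hasTwoJetAt_log_det_hessMatrix (hu : ContDiff ℝ ∞ u)
    (h : hessMatrix u v y = Matrix.diagonal lam) (hlam : ∀ a, 0 < lam a) (w : E) :
    HasTwoJetAt (fun x => Real.log (hessMatrix u v x).det) w
      (∑ a, dirDeriv w (dirDeriv (v a) (dirDeriv (v a) u)) y / lam a)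
      (∑ a, dirDeriv w (dirDeriv w (dirDeriv (v a) (dirDeriv (v a) u))) y / lam a
        - ∑ a, ∑ b, dirDeriv w (dirDeriv (v a) (dirDeriv (v b) u)) y ^ 2 / (lam a * lam b)) y := by
  have hinv : (hessMatrix u v y)⁻¹ = Matrix.diagonal fun a => (lam a)⁻¹ := by
    rw [h]
    refine Matrix.inv_eq_left_inv ?_
    simp [Matrix.diagonal_mul_diagonal, (hlam _).ne']
  have hdet : (hessMatrix u v y).det ≠ 0 := by
    rw [h, Matrix.det_diagonal]
    exact Finset.prod_ne_zero_iff.2 fun a _ => (hlam a).ne'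
  refine (HasTwoJetAt.log_det (M := hessMatrix u v)
    (B := Matrix.of fun a b => dirDeriv w (dirDeriv (v a) (dirDeriv (v b) u)) y)
    (C := Matrix.of fun a b => dirDeriv w (dirDeriv w (dirDeriv (v a) (dirDeriv (v b) u))) y)
    (fun a b => hasTwoJetAt_of_contDiff
      (contDiff_dirDeriv (contDiff_dirDeriv hu (v b)) (v a)) w y) hdet).congr_jet ?_ ?_
  · simp [hinv, Matrix.trace, div_eq_inv_mul]
  · rw [hinv]
    simp only [Matrix.trace, Matrix.diag_apply]
    congr 1
    · simp [div_eq_inv_mul]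
    · refine Finset.sum_congr rfl fun a _ => ?_
      rw [Matrix.mul_apply]
      refine Finset.sum_congr rfl fun b _ => ?_
      simp only [Matrix.diagonal_mul, Matrix.of_apply]
      rw [dirDeriv_comm hu (v b) (v a)]
      field_simp

/-- The mixed third derivatives `u_kab` with `a, b ≠ k` only help. -/
lemma log_det_hessMatrix_jet_le (hu : ContDiff ℝ ∞ u)
    (h : hessMatrix u v y = Matrix.diagonal lam) (hlam : ∀ a, 0 < lam a) {k : ι} {G₁ G₂ : ℝ}
    (hG : HasTwoJetAt (fun x => Real.log (hessMatrix u v x).det) (v k) G₁ G₂ y) :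
    G₂ ≤ ∑ a, (dirDeriv (v a) (dirDeriv (v a) (dirDeriv (v k) (dirDeriv (v k) u))) y / lam a
      - dirDeriv (v a) (dirDeriv (v k) (dirDeriv (v k) u)) y ^ 2 / (lam k * lam a)) := by
  rw [(hG.unique (hasTwoJetAt_log_det_hessMatrix hu h hlam (v k))).2, Finset.sum_sub_distrib]
  have hcomm (a : ι) : dirDeriv (v k) (dirDeriv (v a) u) = dirDeriv (v a) (dirDeriv (v k) u) :=
    dirDeriv_comm hu _ _
  have hcomm' (a b : ι) : dirDeriv (v k) (dirDeriv (v a) (dirDeriv (v b) u))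
      = dirDeriv (v a) (dirDeriv (v k) (dirDeriv (v b) u)) :=
    dirDeriv_comm (contDiff_dirDeriv hu _) _ _
  refine sub_le_sub (le_of_eq (Finset.sum_congr rfl fun a _ => ?_)) ?_
  · rw [hcomm', dirDeriv_comm (contDiff_dirDeriv (contDiff_dirDeriv hu _) _), hcomm, hcomm']
  · rw [Finset.sum_comm]
    refine le_trans (le_of_eq ?_) (Finset.single_le_sum (fun b _ => Finset.sum_nonneg fun a _ =>
      div_nonneg (sq_nonneg _) (mul_pos (hlam a) (hlam b)).le) (Finset.mem_univ k))
    exact Finset.sum_congr rfl fun a _ => by rw [hcomm', mul_comm]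

/-- Pogorelov's computation: at an interior maximum of `log u_kk + φ` the third derivatives
produced by `log det D²u` are absorbed by those produced by `log u_kk`. -/
lemma log_det_hessMatrix_jet_le_of_isLocalMax (hu : ContDiff ℝ ∞ u)
    (h : hessMatrix u v y = Matrix.diagonal lam) (hlam : ∀ a, 0 < lam a) {k : ι} {G₁ G₂ : ℝ}
    (hG : HasTwoJetAt (fun x => Real.log (hessMatrix u v x).det) (v k) G₁ G₂ y) {φ₁ φ₂ : ι → ℝ}
    (hφ : ∀ a, HasTwoJetAt φ (v a) (φ₁ a) (φ₂ a) y)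
    (hmax : IsLocalMax (fun x => Real.log (dirDeriv (v k) (dirDeriv (v k) u) x) + φ x) y) :
    (∀ a, dirDeriv (v a) (dirDeriv (v k) (dirDeriv (v k) u)) y = -(lam k * φ₁ a)) ∧
      G₂ + lam k * ∑ a, φ₂ a / lam a ≤ 0 := by
  have hkk : dirDeriv (v k) (dirDeriv (v k) u) y = lam k := by
    rw [dirDeriv_dirDeriv_of_hessMatrix_eq_diagonal h, if_pos rfl]
  have hk := hlam k
  have hjet (a : ι) := HasTwoJetAt.eq_zero_and_nonpos_of_isLocalMax
    (((hasTwoJetAt_of_contDiff (contDiff_dirDeriv (contDiff_dirDeriv hu (v k)) (v k)) (v a) y).log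
      (hkk ▸ hk.ne')).add (hφ a)) (isLocalMax_line hmax (v a))
  simp only [hkk] at hjet
  refine ⟨fun a => ?_, ?_⟩
  · have := (hjet a).1
    field_simp at this
    linarith
  · have hle := log_det_hessMatrix_jet_le hu h hlam hG
    rw [Finset.mul_sum]
    refine (add_le_add_left hle _).trans ?_
    rw [← Finset.sum_add_distrib]
    refine Finset.sum_nonpos fun a _ => ?_
    have ha := hlam a
    have := mul_nonpos_of_nonneg_of_nonpos (div_pos hk ha).le (hjet a).2
    refine le_trans (le_of_eq ?_) this
    field_simp

end HessianMatrix

section GradientTerms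

variable {E : Type*} [NormedAddCommGroup E] [InnerProductSpace ℝ E] {u : E → ℝ}

/-- The negative of the Legendre transform of `u` at the slope `Du(y)`, as a function of `y`. -/
def negLegendre (u : E → ℝ) (y : E) : ℝ := u y - dirDeriv y u y

lemma hasTwoJetAt_negLegendre (hu : ContDiff ℝ ∞ u) (w y : E) :
    HasTwoJetAt (negLegendre u) w (-dirDeriv w (dirDeriv y u) y)
      (-dirDeriv w (dirDeriv w u) y - dirDeriv y (dirDeriv w (dirDeriv w u)) y) y := by
  have hd (f : E → ℝ) (hf : ContDiff ℝ ∞ f) (t : ℝ) :=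
    hasDerivAt_line (hf.differentiable (by simp)) y w t
  have hline : (fun t : ℝ => negLegendre u (y + t • w)) = fun t : ℝ => u (y + t • w)
      - (dirDeriv y u (y + t • w) + t * dirDeriv w u (y + t • w)) := by
    funext t
    rw [negLegendre, dirDeriv_add, dirDeriv_smul]
  refine ⟨fun t => -dirDeriv w (dirDeriv y u) (y + t • w)
    - t * dirDeriv w (dirDeriv w u) (y + t • w), Eventually.of_forall fun t => ?_, by simp, ?_⟩
  · rw [hline]
    refine ((hd u hu t).sub ((hd _ (contDiff_dirDeriv hu y) t).add
      ((hasDerivAt_id t).mul (hd _ (contDiff_dirDeriv hu w) t)))).congr_deriv ?_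
    simp only [id_eq]
    ring
  · have hww := contDiff_dirDeriv (contDiff_dirDeriv hu w) w
    refine ((hd _ (contDiff_dirDeriv (contDiff_dirDeriv hu y) w) 0).neg.sub
      ((hasDerivAt_id' 0).mul (hd _ hww 0))).congr_deriv ?_
    rw [dirDeriv_comm hu w y, dirDeriv_comm (contDiff_dirDeriv hu w) w y]
    simp only [zero_smul, add_zero]
    ring

lemma dirDeriv_eq_sum {ι : Type*} [Fintype ι] (v : OrthonormalBasis ι ℝ E) (x : E) (f : E → ℝ)
    (y : E) : dirDeriv x f y = ∑ b, ⟪v b, x⟫ * dirDeriv (v b) f y := by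
  conv_lhs => rw [← v.sum_repr' x]
  simp only [dirDeriv, map_sum, map_smul, smul_eq_mul]

variable [CompleteSpace E]

/-- If `U` is the 1-homogeneous extension `U (t, t y) = t u(y)`, this is `|DU(1, y)|²`. -/
def homogGradSq (u : E → ℝ) (y : E) : ℝ := ‖gradient u y‖ ^ 2 + negLegendre u y ^ 2

/-- The auxiliary term `½|Du|² + a (u - ⟨y, Du⟩)` of the Pogorelov test function. -/
def pogorelovTerm (a : ℝ) (u : E → ℝ) (y : E) : ℝ :=
  1 / 2 * ‖gradient u y‖ ^ 2 + a * negLegendre u y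

lemma contDiff_gradient (hu : ContDiff ℝ ∞ u) : ContDiff ℝ ∞ (gradient u) :=
  (InnerProductSpace.toDual ℝ E).symm.contDiff.comp (hu.fderiv_right (m := ∞) (by simp))

lemma inner_gradient_eq_dirDeriv (u : E → ℝ) (y w : E) : ⟪gradient u y, w⟫ = dirDeriv w u y :=
  inner_gradient_left

variable {ι : Type*} [Fintype ι]

lemma dirDeriv_gradient (v : OrthonormalBasis ι ℝ E) (u f : E → ℝ) (y : E) :
    dirDeriv (gradient u y) f y = ∑ b, dirDeriv (v b) u y * dirDeriv (v b) f y := by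
  rw [dirDeriv_eq_sum v]
  simp only [real_inner_comm, inner_gradient_eq_dirDeriv]

lemma hasTwoJetAt_norm_gradient_sq (hu : ContDiff ℝ ∞ u) (v : OrthonormalBasis ι ℝ E) (w y : E) :
    HasTwoJetAt (fun x => ‖gradient u x‖ ^ 2) w (2 * dirDeriv w (dirDeriv (gradient u y) u) y)
      (2 * (∑ b, dirDeriv w (dirDeriv (v b) u) y ^ 2
        + dirDeriv (gradient u y) (dirDeriv w (dirDeriv w u)) y)) y := by
  have hsum (x : E) : ‖gradient u x‖ ^ 2 = ∑ b, dirDeriv (v b) u x * dirDeriv (v b) u x := by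
    rw [← dirDeriv_gradient, ← inner_gradient_eq_dirDeriv, real_inner_self_eq_norm_sq]
  have hb (b : ι) := hasTwoJetAt_of_contDiff (contDiff_dirDeriv hu (v b)) w y
  simp only [hsum]
  refine (HasTwoJetAt.sum Finset.univ fun b _ => (hb b).mul (hb b)).congr_jet ?_ ?_
  · rw [dirDeriv_comm hu, dirDeriv_gradient v, Finset.mul_sum]
    refine Finset.sum_congr rfl fun b _ => ?_
    rw [dirDeriv_comm hu w]
    ring
  · rw [dirDeriv_gradient v, ← Finset.sum_add_distrib, Finset.mul_sum]
    refine Finset.sum_congr rfl fun b _ => ?_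
    rw [← dirDeriv_comm (contDiff_dirDeriv hu w) w, ← dirDeriv_comm hu w]
    ring

lemma hasTwoJetAt_homogGradSq (hu : ContDiff ℝ ∞ u) (v : OrthonormalBasis ι ℝ E) (w y : E) :
    HasTwoJetAt (homogGradSq u) w
      (2 * dirDeriv w (dirDeriv (gradient u y - negLegendre u y • y) u) y)
      (2 * (∑ b, dirDeriv w (dirDeriv (v b) u) y ^ 2 + dirDeriv w (dirDeriv y u) y ^ 2
          - negLegendre u y * dirDeriv w (dirDeriv w u) y)
        + 2 * dirDeriv (gradient u y - negLegendre u y • y) (dirDeriv w (dirDeriv w u)) y) y := by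
  have hs := hasTwoJetAt_negLegendre hu w y
  refine (((hasTwoJetAt_norm_gradient_sq hu v w y).add (hs.mul hs)).congr_of_eventuallyEq
    (Eventually.of_forall fun t => by rw [homogGradSq, pow_two (negLegendre u _)])).congr_jet ?_ ?_
  · rw [dirDeriv_comm hu w (_ - _), dirDeriv_sub_smul, dirDeriv_comm hu w y,
      dirDeriv_comm hu w (gradient u y)]
    ring
  · rw [dirDeriv_sub_smul]
    ring

lemma hasTwoJetAt_pogorelovTerm (hu : ContDiff ℝ ∞ u) (v : OrthonormalBasis ι ℝ E) (a : ℝ)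
    (w y : E) :
    HasTwoJetAt (pogorelovTerm a u) w (dirDeriv w (dirDeriv (gradient u y - a • y) u) y)
      (∑ b, dirDeriv w (dirDeriv (v b) u) y ^ 2 - a * dirDeriv w (dirDeriv w u) y
        + dirDeriv (gradient u y - a • y) (dirDeriv w (dirDeriv w u)) y) y := by
  refine (((hasTwoJetAt_norm_gradient_sq hu v w y).const_mul (1 / 2)).add
    ((hasTwoJetAt_negLegendre hu w y).const_mul a)).congr_jet ?_ ?_
  · rw [dirDeriv_comm hu w (_ - _), dirDeriv_sub_smul, dirDeriv_comm hu w y,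
      dirDeriv_comm hu w (gradient u y)]
    ring
  · rw [dirDeriv_sub_smul]
    ring

end GradientTerms

section InteriorInequality

variable {E : Type*} [NormedAddCommGroup E] [InnerProductSpace ℝ E]
  {ι : Type*} [Fintype ι] [DecidableEq ι] {u Γ₀ : E → ℝ} {v : OrthonormalBasis ι ℝ E} {y : E}
  {lam : ι → ℝ} {P γ : ℝ}

lemma sum_dirDeriv_basis_sq (hdiag : hessMatrix u v y = Matrix.diagonal lam) (a : ι) :
    ∑ b, dirDeriv (v a) (dirDeriv (v b) u) y ^ 2 = lam a ^ 2 := by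
  simp [dirDeriv_dirDeriv_of_hessMatrix_eq_diagonal hdiag, ite_pow]

lemma dirDeriv_basis_dirDeriv (hu : ContDiff ℝ ∞ u)
    (hdiag : hessMatrix u v y = Matrix.diagonal lam) (a : ι) (x : E) :
    dirDeriv (v a) (dirDeriv x u) y = lam a * ⟪v a, x⟫ := by
  rw [dirDeriv_comm hu, dirDeriv_eq_sum v]
  simp [dirDeriv_dirDeriv_of_hessMatrix_eq_diagonal hdiag, mul_comm]

variable [CompleteSpace E]

/-- The equation `log det D²u = Γ₀ + P log u + γ log (|Du|² + (u - ⟨y, Du⟩)²)` holds near `y`. -/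
def SolvesLogDetEqNear (Γ₀ : E → ℝ) (P γ : ℝ) (u : E → ℝ) (v : OrthonormalBasis ι ℝ E) (y : E) :
    Prop :=
  ∀ᶠ x in 𝓝 y, Real.log (hessMatrix u v x).det
    = Γ₀ x + (P * Real.log (u x) + γ * Real.log (homogGradSq u x))

lemma SolvesLogDetEqNear.hasTwoJetAt (heq : SolvesLogDetEqNear Γ₀ P γ u v y)
    (hu : ContDiff ℝ ∞ u) (hu0 : u y ≠ 0) (hV0 : homogGradSq u y ≠ 0) {w : E} {F₁ F₂ : ℝ}
    (hF : HasTwoJetAt Γ₀ w F₁ F₂ y) :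
    HasTwoJetAt (fun x => Real.log (hessMatrix u v x).det) w
      (F₁ + (P * (dirDeriv w u y / u y)
        + γ * (2 * dirDeriv w (dirDeriv (gradient u y - negLegendre u y • y) u) y
          / homogGradSq u y)))
      (F₂ + (P * (dirDeriv w (dirDeriv w u) y / u y - dirDeriv w u y ^ 2 / u y ^ 2)
        + γ * ((2 * (∑ b, dirDeriv w (dirDeriv (v b) u) y ^ 2 + dirDeriv w (dirDeriv y u) y ^ 2
            - negLegendre u y * dirDeriv w (dirDeriv w u) y)
          + 2 * dirDeriv (gradient u y - negLegendre u y • y) (dirDeriv w (dirDeriv w u)) y)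
            / homogGradSq u y
          - (2 * dirDeriv w (dirDeriv (gradient u y - negLegendre u y • y) u) y) ^ 2
            / homogGradSq u y ^ 2))) y := by
  have hline : Tendsto (fun t : ℝ => y + t • w) (𝓝 0) (𝓝 y) := by
    simpa using Continuous.tendsto (f := fun t : ℝ => y + t • w) (by fun_prop) 0
  exact (hF.add ((((hasTwoJetAt_of_contDiff hu w y).log hu0).const_mul P).add
    (((hasTwoJetAt_homogGradSq hu v w y).log hV0).const_mul γ))).congr_of_eventuallyEq
      ((hline.eventually heq).mono fun _ h => h.symm)

/-- The third derivatives of `u` coming from the gradient term of the equation cancel against those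
coming from the gradient term of the test function: by the first-order condition at the maximum
both are contractions of `D²u` with the same two vectors. -/
lemma pogorelov_interior_inequality (hu : ContDiff ℝ ∞ u)
    (hdiag : hessMatrix u v y = Matrix.diagonal lam)
    (hlam : ∀ a, 0 < lam a) (hu0 : u y ≠ 0) (hV0 : homogGradSq u y ≠ 0)
    (heq : SolvesLogDetEqNear Γ₀ P γ u v y) {k : ι} {a β F₁ F₂ X₁ X₂ : ℝ}
    (hk : HasTwoJetAt Γ₀ (v k) F₁ F₂ y) (hX : HasTwoJetAt Γ₀ (gradient u y - a • y) X₁ X₂ y)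
    (hmax : IsLocalMax (fun x => Real.log (dirDeriv (v k) (dirDeriv (v k) u) x)
      + β * pogorelovTerm a u x) y) :
    F₂ + P * (lam k / u y - dirDeriv (v k) u y ^ 2 / u y ^ 2)
      + γ * (2 * (lam k ^ 2 * (1 + ⟪v k, y⟫ ^ 2) - negLegendre u y * lam k) / homogGradSq u y
        - (2 * (lam k * ⟪v k, gradient u y - negLegendre u y • y⟫)) ^ 2 / homogGradSq u y ^ 2)
      + lam k * (β * (∑ b, lam b - Fintype.card ι * a + X₁
        + P * (dirDeriv (gradient u y - a • y) u y / u y))) ≤ 0 := by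
  set X := gradient u y - a • y with hXdef
  set Z := gradient u y - negLegendre u y • y with hZdef
  have hbasis := dirDeriv_basis_dirDeriv hu hdiag
  obtain ⟨hfirst, hsecond⟩ := log_det_hessMatrix_jet_le_of_isLocalMax hu hdiag hlam
    (heq.hasTwoJetAt hu hu0 hV0 hk)
    (fun b => (hasTwoJetAt_pogorelovTerm hu v a (v b) y).const_mul β) hmax
  simp only [← hXdef, ← hZdef, sum_dirDeriv_basis_sq hdiag] at hfirst hsecond
  simp only [hbasis, v.inner_eq_one, mul_one] at hfirst hsecond
  have hX_log_det := ((heq.hasTwoJetAt hu hu0 hV0 hX).unique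
    (hasTwoJetAt_log_det_hessMatrix hu hdiag hlam X)).1
  rw [← hZdef] at hX_log_det
  have hthird : dirDeriv Z (dirDeriv (v k) (dirDeriv (v k) u)) y
      = -(lam k * β * dirDeriv X (dirDeriv Z u) y) := by
    rw [dirDeriv_eq_sum v Z, dirDeriv_eq_sum v X, Finset.mul_sum, ← Finset.sum_neg_distrib]
    refine Finset.sum_congr rfl fun b _ => ?_
    rw [hfirst, hbasis]
    ring
  have htrace : ∑ b, β * (lam b ^ 2 - a * lam b
        + dirDeriv X (dirDeriv (v b) (dirDeriv (v b) u)) y) / lam b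
      = β * (∑ b, lam b - Fintype.card ι * a
        + ∑ b, dirDeriv X (dirDeriv (v b) (dirDeriv (v b) u)) y / lam b) := by
    have hterm (b : ι) (t : ℝ) : β * (lam b ^ 2 - a * lam b + t) / lam b
        = β * (lam b - a + t / lam b) := by
      field_simp [(hlam b).ne']
    simp only [hterm, ← Finset.mul_sum, Finset.sum_add_distrib, Finset.sum_sub_distrib,
      Finset.sum_const, Finset.card_univ, nsmul_eq_mul]
  rw [htrace, ← hX_log_det, hthird] at hsecond
  refine le_trans (le_of_eq ?_) hsecond
  ring

end InteriorInequality

section ConvexFunctions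

variable {E : Type*} [NormedAddCommGroup E] [NormedSpace ℝ E] {s : Set E} {u : E → ℝ} {y ζ : E}

lemma dirDeriv_mono_segment (hs : Convex ℝ s) (hu : ContDiff ℝ ∞ u)
    (hconv : ∀ z ∈ s, 0 ≤ dirDeriv ζ (dirDeriv ζ u) z) (hy : y ∈ s) (hyζ : y + ζ ∈ s) :
    MonotoneOn (fun t : ℝ => dirDeriv ζ u (y + t • ζ)) (Icc 0 1) := by
  have hd (t : ℝ) := hasDerivAt_line ((contDiff_dirDeriv hu ζ).differentiable (by simp)) y ζ t
  refine monotoneOn_of_deriv_nonneg (convex_Icc 0 1)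
    (fun t _ => (hd t).continuousAt.continuousWithinAt)
    (fun t _ => (hd t).differentiableAt.differentiableWithinAt) fun t ht => ?_
  rw [(hd t).deriv]
  exact hconv _ (hs.add_smul_mem hy hyζ (interior_subset ht))

lemma dirDeriv_le_dirDeriv_add (hs : Convex ℝ s) (hu : ContDiff ℝ ∞ u)
    (hconv : ∀ z ∈ s, 0 ≤ dirDeriv ζ (dirDeriv ζ u) z) (hy : y ∈ s) (hyζ : y + ζ ∈ s) :
    dirDeriv ζ u y ≤ dirDeriv ζ u (y + ζ) := by
  simpa using dirDeriv_mono_segment hs hu hconv hy hyζ (left_mem_Icc.2 zero_le_one)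
    (right_mem_Icc.2 zero_le_one) zero_le_one

lemma add_dirDeriv_le (hs : Convex ℝ s) (hu : ContDiff ℝ ∞ u)
    (hconv : ∀ z ∈ s, 0 ≤ dirDeriv ζ (dirDeriv ζ u) z) (hy : y ∈ s) (hyζ : y + ζ ∈ s) :
    u y + dirDeriv ζ u y ≤ u (y + ζ) := by
  have hd (t : ℝ) := hasDerivAt_line (hu.differentiable (by simp)) y ζ t
  obtain ⟨c, hc, hslope⟩ := exists_hasDerivAt_eq_slope (fun t : ℝ => u (y + t • ζ)) _ zero_lt_one
    (fun t _ => (hd t).continuousAt.continuousWithinAt) fun t _ => hd t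
  have hmono := dirDeriv_mono_segment hs hu hconv hy hyζ (left_mem_Icc.2 zero_le_one)
    ⟨hc.1.le, hc.2.le⟩ hc.1.le
  simp only [zero_smul, add_zero, one_smul, sub_zero, div_one] at hmono hslope
  linarith

end ConvexFunctions

section RobinBall

variable {E : Type*} [NormedAddCommGroup E] [InnerProductSpace ℝ E] {u : E → ℝ} {R K : ℝ} {y : E}

lemma negLegendre_nonneg (hu : ContDiff ℝ ∞ u) (hpos : 0 ≤ u 0)
    (hconv : ∀ z : E, ‖z‖ ≤ R → ∀ ζ, 0 ≤ dirDeriv ζ (dirDeriv ζ u) z)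
    (hrobin : ∀ z : E, ‖z‖ = R → dirDeriv z u z = u z) (hy : ‖y‖ ≤ R) :
    0 ≤ negLegendre u y := by
  rcases eq_or_ne y 0 with rfl | hy0
  · simpa [negLegendre, dirDeriv] using hpos
  have hnorm : 0 < ‖y‖ := norm_pos_iff.2 hy0
  have hR : 0 < R := hnorm.trans_le hy
  obtain ⟨z, τ, hz, hτ0, hτ1, rfl⟩ : ∃ (z : E) (τ : ℝ), ‖z‖ = R ∧ 0 < τ ∧ τ ≤ 1 ∧ y = τ • z := by
    refine ⟨(R / ‖y‖) • y, ‖y‖ / R, ?_, by positivity, (div_le_one hR).2 hy, ?_⟩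
    · rw [norm_smul, norm_of_nonneg (by positivity), div_mul_cancel₀ _ hnorm.ne']
    · rw [smul_smul, div_mul_div_cancel₀ hR.ne', div_self hnorm.ne', one_smul]
  have hball : Convex ℝ (Metric.closedBall (0 : E) R) := convex_closedBall 0 R
  have hconv' (ζ : E) : ∀ x ∈ Metric.closedBall (0 : E) R, 0 ≤ dirDeriv ζ (dirDeriv ζ u) x :=
    fun x hx => hconv x (by simpa using hx) ζ
  have hsum : z + (τ - 1) • z = τ • z := by module
  have hsum' : τ • z + (1 - τ) • z = z := by module
  have htangent := add_dirDeriv_le (y := z) hball hu (hconv' ((τ - 1) • z)) (by simp [hz])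
    (by simpa [hsum] using hy)
  have hslope := dirDeriv_le_dirDeriv_add hball hu (hconv' ((1 - τ) • z))
    (by simpa using hy) (by simp [hsum', hz])
  rw [hsum, dirDeriv_smul, hrobin z hz] at htangent
  rw [hsum', dirDeriv_smul, dirDeriv_smul, hrobin z hz] at hslope
  rw [negLegendre, dirDeriv_smul]
  rcases hτ1.eq_or_lt with rfl | hlt
  · simp [hrobin z hz]
  · have := le_of_mul_le_mul_left hslope (sub_pos.2 hlt)
    nlinarith

lemma negLegendre_le (hu : ContDiff ℝ ∞ u)
    (hconv : ∀ z : E, ‖z‖ ≤ R → ∀ ζ, 0 ≤ dirDeriv ζ (dirDeriv ζ u) z) (hy : ‖y‖ ≤ R) :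
    negLegendre u y ≤ u 0 := by
  have htangent := add_dirDeriv_le (y := y) (ζ := (-1 : ℝ) • y) (convex_closedBall (0 : E) R) hu
    (fun z hz => hconv z (by simpa using hz) _) (by simpa using hy)
    (by simpa using (norm_nonneg y).trans hy)
  rw [dirDeriv_smul] at htangent
  simpa [negLegendre, sub_eq_add_neg] using htangent

lemma dirDeriv_le_of_norm_eq_one (hu : ContDiff ℝ ∞ u) (hR : 0 < R) (hpos : 0 ≤ u 0)
    (hK : ∀ z : E, ‖z‖ ≤ R → u z ≤ K)
    (hconv : ∀ z : E, ‖z‖ ≤ R → ∀ ζ, 0 ≤ dirDeriv ζ (dirDeriv ζ u) z)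
    (hrobin : ∀ z : E, ‖z‖ = R → dirDeriv z u z = u z) (hy : ‖y‖ ≤ R) {ζ : E} (hζ : ‖ζ‖ = 1) :
    dirDeriv ζ u y ≤ K / R := by
  have hnorm : ‖R • ζ‖ = R := by rw [norm_smul, hζ, norm_of_nonneg hR.le, mul_one]
  have hsum : y + (R • ζ - (1 : ℝ) • y) = R • ζ := by module
  have htangent := add_dirDeriv_le (y := y) (convex_closedBall (0 : E) R) hu
    (fun z hz => hconv z (by simpa using hz) (R • ζ - (1 : ℝ) • y)) (by simpa using hy)
    (by simp [hnorm])
  rw [hsum, dirDeriv_sub_smul, dirDeriv_smul] at htangent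
  have hlegendre := negLegendre_nonneg hu hpos hconv hrobin hy
  rw [negLegendre] at hlegendre
  rw [le_div_iff₀ hR]
  linarith [hK _ hnorm.le]

lemma norm_gradient_le_of_robin [CompleteSpace E] (hu : ContDiff ℝ ∞ u) (hR : 0 < R)
    (hpos : 0 ≤ u 0) (hK : ∀ z : E, ‖z‖ ≤ R → u z ≤ K)
    (hconv : ∀ z : E, ‖z‖ ≤ R → ∀ ζ, 0 ≤ dirDeriv ζ (dirDeriv ζ u) z)
    (hrobin : ∀ z : E, ‖z‖ = R → dirDeriv z u z = u z) (hy : ‖y‖ ≤ R) :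
    ‖gradient u y‖ ≤ K / R := by
  rcases eq_or_ne (gradient u y) 0 with h0 | h0
  · have hK0 : 0 ≤ K := hpos.trans (hK 0 (by simpa using hR.le))
    rw [h0, norm_zero]
    positivity
  · have hnorm : ‖gradient u y‖ ≠ 0 := norm_ne_zero_iff.2 h0
    refine le_of_eq_of_le ?_ (dirDeriv_le_of_norm_eq_one hu hR hpos hK hconv hrobin hy
      (norm_smul_inv_norm (𝕜 := ℝ) h0))
    rw [← inner_gradient_eq_dirDeriv, real_inner_smul_right, real_inner_self_eq_norm_sq]
    simp only [RCLike.ofReal_real_eq_id, id_eq]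
    field_simp

end RobinBall

section SphereDerivatives

variable {E : Type*} [NormedAddCommGroup E] [InnerProductSpace ℝ E] {u f : E → ℝ} {R : ℝ} {y w : E}

lemma norm_cos_smul_add_sin_smul (hyw : ⟪y, w⟫ = 0) (hnorm : ‖w‖ = ‖y‖) (t : ℝ) :
    ‖Real.cos t • y + Real.sin t • w‖ = ‖y‖ := by
  rw [← sq_eq_sq₀ (norm_nonneg _) (norm_nonneg _), norm_add_sq_real, real_inner_smul_left,
    real_inner_smul_right, hyw, norm_smul, norm_smul, hnorm, mul_pow, mul_pow, norm_eq_abs,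
    norm_eq_abs, sq_abs, sq_abs]
  linear_combination ‖y‖ ^ 2 * Real.sin_sq_add_cos_sq t

lemma dirDeriv_of_eq_zero_on_sphere_of_norm_eq (hf : ContDiff ℝ ∞ f)
    (hzero : ∀ z : E, ‖z‖ = ‖y‖ → f z = 0) (hyw : ⟪y, w⟫ = 0) (hnorm : ‖w‖ = ‖y‖) :
    dirDeriv w f y = 0 ∧ dirDeriv w (dirDeriv w f) y = dirDeriv y f y := by
  set c : ℝ → E := fun t => Real.cos t • y + Real.sin t • w
  have hc (t : ℝ) : HasDerivAt c ((-Real.sin t) • y + Real.cos t • w) t :=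
    ((Real.hasDerivAt_cos t).smul_const y).add ((Real.hasDerivAt_sin t).smul_const w)
  have hc0 : c 0 = y := by simp [c]
  have hd (g : E → ℝ) (hg : ContDiff ℝ ∞ g) (t : ℝ) : HasDerivAt (fun t => g (c t))
      (-Real.sin t * dirDeriv y g (c t) + Real.cos t * dirDeriv w g (c t)) t := by
    simpa only [dirDeriv_add, dirDeriv_smul]
      using hasDerivAt_comp_dirDeriv (hg.differentiable (by simp)) (hc t)
  have hzero' (t : ℝ) :
      -Real.sin t * dirDeriv y f (c t) + Real.cos t * dirDeriv w f (c t) = 0 :=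
    (hd f hf t).unique ((hasDerivAt_const t (0 : ℝ)).congr_of_eventuallyEq
      (Eventually.of_forall fun t => hzero _ (norm_cos_smul_add_sin_smul hyw hnorm t)))
  have hsecond := (((Real.hasDerivAt_sin 0).neg.mul (hd _ (contDiff_dirDeriv hf y) 0)).add
    ((Real.hasDerivAt_cos 0).mul (hd _ (contDiff_dirDeriv hf w) 0))).unique
    ((hasDerivAt_const 0 (0 : ℝ)).congr_of_eventuallyEq (Eventually.of_forall hzero'))
  refine ⟨by simpa [hc0] using hzero' 0, ?_⟩
  simp only [hc0, Pi.neg_apply, Real.sin_zero, Real.cos_zero] at hsecond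
  linarith

lemma dirDeriv_dirDeriv_smul (hu : ContDiff ℝ ∞ u) (a : ℝ) (w y : E) :
    dirDeriv (a • w) (dirDeriv (a • w) u) y = a ^ 2 * dirDeriv w (dirDeriv w u) y := by
  simp only [dirDeriv_dirDeriv hu, map_smul, smul_apply, smul_eq_mul]
  ring

lemma dirDeriv_of_eq_zero_on_sphere (hf : ContDiff ℝ ∞ f) (hy : y ≠ 0)
    (hzero : ∀ z : E, ‖z‖ = ‖y‖ → f z = 0) (hyw : ⟪y, w⟫ = 0) :
    dirDeriv w f y = 0 ∧ ‖y‖ ^ 2 * dirDeriv w (dirDeriv w f) y = ‖w‖ ^ 2 * dirDeriv y f y := by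
  rcases eq_or_ne w 0 with rfl | hw
  · simp [dirDeriv]
  have : 0 < ‖y‖ := norm_pos_iff.2 hy
  have hw' : 0 < ‖w‖ := norm_pos_iff.2 hw
  obtain ⟨hfirst, hsecond⟩ := dirDeriv_of_eq_zero_on_sphere_of_norm_eq (w := (‖y‖ / ‖w‖) • w) hf
    hzero (by rw [real_inner_smul_right, hyw, mul_zero])
    (by rw [norm_smul, norm_of_nonneg (by positivity), div_mul_cancel₀ _ hw'.ne'])
  rw [dirDeriv_smul, mul_eq_zero] at hfirst
  rw [dirDeriv_dirDeriv_smul hf] at hsecond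
  refine ⟨hfirst.resolve_left (by positivity), ?_⟩
  rw [← hsecond]
  field_simp

lemma contDiff_negLegendre (hu : ContDiff ℝ ∞ u) : ContDiff ℝ ∞ (negLegendre u) :=
  hu.sub ((hu.fderiv_right (m := ∞) (by simp)).clm_apply contDiff_id)

lemma dirDeriv_dirDeriv_position_of_robin (hu : ContDiff ℝ ∞ u) (hy : y ≠ 0)
    (hrobin : ∀ z : E, ‖z‖ = ‖y‖ → dirDeriv z u z = u z) (w : E) :
    dirDeriv w (dirDeriv y u) y = dirDeriv y (dirDeriv y u) y / ‖y‖ ^ 2 * ⟪w, y⟫ := by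
  have hy' : ‖y‖ ≠ 0 := norm_ne_zero_iff.2 hy
  have horth : ⟪y, w - (⟪w, y⟫ / ‖y‖ ^ 2) • y⟫ = 0 := by
    rw [inner_sub_right, real_inner_smul_right, real_inner_self_eq_norm_sq, real_inner_comm]
    field_simp
    ring
  have hfirst := (dirDeriv_of_eq_zero_on_sphere (contDiff_negLegendre hu) hy
    (fun z hz => by rw [negLegendre, hrobin z hz, sub_self]) horth).1
  rw [((hasTwoJetAt_of_contDiff (contDiff_negLegendre hu) _ y).unique
    (hasTwoJetAt_negLegendre hu _ y)).1, neg_eq_zero, dirDeriv_sub_smul] at hfirst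
  linear_combination hfirst

lemma dirDeriv_position_dirDeriv_dirDeriv_of_robin (hu : ContDiff ℝ ∞ u) (hy : y ≠ 0)
    (hrobin : ∀ z : E, ‖z‖ = ‖y‖ → dirDeriv z u z = u z) (hyw : ⟪y, w⟫ = 0) (hw : ‖w‖ = 1) :
    dirDeriv y (dirDeriv w (dirDeriv w u)) y
      = dirDeriv y (dirDeriv y u) y / ‖y‖ ^ 2 - dirDeriv w (dirDeriv w u) y := by
  have hy' : ‖y‖ ≠ 0 := norm_ne_zero_iff.2 hy
  have hjet (x : E) := (hasTwoJetAt_of_contDiff (contDiff_negLegendre hu) x y).unique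
    (hasTwoJetAt_negLegendre hu x y)
  have hsecond := (dirDeriv_of_eq_zero_on_sphere (contDiff_negLegendre hu) hy
    (fun z hz => by rw [negLegendre, hrobin z hz, sub_self]) hyw).2
  rw [(hjet w).2, (hjet y).1, hw] at hsecond
  field_simp
  linear_combination -hsecond

end SphereDerivatives

section BoundaryEstimate

lemma HasTwoJetAt.nonneg_of_isMaxOn {E : Type*} [NormedAddCommGroup E] [NormedSpace ℝ E]
    {f : E → ℝ} {v y : E} {b c : ℝ} (h : HasTwoJetAt f v b c y) {s : Set E} (hs : Convex ℝ s)
    (hy : y ∈ s) (hyv : y - v ∈ s) (hmax : IsMaxOn f s y) : 0 ≤ b := by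
  refine ge_of_tendsto (h.hasDerivAt.tendsto_slope.mono_left (nhdsLT_le_nhdsNE 0)) ?_
  filter_upwards [Ioo_mem_nhdsLT (show (-1 : ℝ) < 0 by norm_num)] with t ht
  have hmem : y + t • v ∈ s := by
    have := hs.add_smul_mem (x := y) (y := -v) (t := -t) hy (by simpa [sub_eq_add_neg] using hyv)
      ⟨by linarith [ht.2], by linarith [ht.1]⟩
    simpa using this
  rw [slope_def_field, zero_smul, add_zero, sub_zero]
  exact div_nonneg_of_nonpos (sub_nonpos.2 (hmax hmem)) ht.2.le

variable {E : Type*} [NormedAddCommGroup E] [InnerProductSpace ℝ E] [CompleteSpace E]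
  {ι : Type*} [Fintype ι] [DecidableEq ι] {u : E → ℝ} {v : OrthonormalBasis ι ℝ E} {y : E}
  {lam : ι → ℝ}

/-- At a boundary maximum the Robin condition makes `y` an eigenvector of `D²u(y)`. If the maximal
direction is tangential, the radial derivative of the test function has the sign of
`D²u(y, y) - ‖y‖² lam k` up to a nonpositive term. -/
lemma eigenvalue_le_of_boundary_max (hu : ContDiff ℝ ∞ u) (hy : y ≠ 0)
    (hrobin : ∀ z : E, ‖z‖ = ‖y‖ → dirDeriv z u z = u z)
    (hdiag : hessMatrix u v y = Matrix.diagonal lam) {k : ι} (hlam : 0 < lam k) {a β : ℝ}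
    (hβ : 0 ≤ β) (ha : u y ≤ a * ‖y‖ ^ 2) (hradial : 0 ≤ dirDeriv y (dirDeriv y u) y)
    (hmax : IsMaxOn (fun x => Real.log (dirDeriv (v k) (dirDeriv (v k) u) x)
      + β * pogorelovTerm a u x) (Metric.closedBall 0 ‖y‖) y) :
    lam k ≤ dirDeriv y (dirDeriv y u) y / ‖y‖ ^ 2 := by
  set ρ := dirDeriv y (dirDeriv y u) y / ‖y‖ ^ 2 with hρ
  have hposition := dirDeriv_dirDeriv_position_of_robin hu hy hrobin
  have hkk : dirDeriv (v k) (dirDeriv (v k) u) y = lam k := by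
    rw [dirDeriv_dirDeriv_of_hessMatrix_eq_diagonal hdiag, if_pos rfl]
  by_cases htangential : ⟪v k, y⟫ = 0
  swap
  · have heigen := hposition (v k)
    rw [dirDeriv_basis_dirDeriv hu hdiag] at heigen
    exact (mul_right_cancel₀ htangential heigen).le
  have hlog := (hasTwoJetAt_of_contDiff
    (contDiff_dirDeriv (contDiff_dirDeriv hu (v k)) (v k)) y y).log (by rw [hkk]; exact hlam.ne')
  have hjet := hlog.add ((hasTwoJetAt_pogorelovTerm hu v a y y).const_mul β)
  have hslope := hjet.nonneg_of_isMaxOn (convex_closedBall 0 ‖y‖) (by simp) (by simp) hmax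
  rw [dirDeriv_position_dirDeriv_dirDeriv_of_robin hu hy hrobin
      (by rw [real_inner_comm, htangential]) (v.norm_eq_one k), hkk, ← hρ,
    dirDeriv_comm hu, hposition, ← hρ, inner_sub_left, real_inner_smul_left,
    real_inner_self_eq_norm_sq, inner_gradient_eq_dirDeriv, hrobin y rfl] at hslope
  have hρ0 : 0 ≤ ρ := by positivity
  have hterm : β * (ρ * (u y - a * ‖y‖ ^ 2)) ≤ 0 :=
    mul_nonpos_of_nonneg_of_nonpos hβ (mul_nonpos_of_nonneg_of_nonpos hρ0 (sub_nonpos.2 ha))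
  have hquot : 0 ≤ (ρ - lam k) / lam k := by linarith
  exact sub_nonneg.1 ((div_nonneg_iff.1 hquot).resolve_right fun h => absurd h.2 hlam.not_ge).1

end BoundaryEstimate

section InteriorAlgebra

variable {L : ℝ}

lemma neg_le_mul_div_sub_sq_div_sq {P u m p G : ℝ} (hm : 0 < m) (hu : m ≤ u) (hp : |p| ≤ G)
    (hL : 1 ≤ L) :
    -(|P| * (1 / m + G ^ 2 / m ^ 2) * L ^ 2) ≤ P * (L / u - p ^ 2 / u ^ 2) := by
  have hu0 : 0 < u := hm.trans_le hu
  have hp2 : p ^ 2 ≤ G ^ 2 := sq_le_sq.2 (hp.trans (le_abs_self G))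
  refine (abs_le.1 ?_).1
  rw [abs_mul, mul_assoc]
  gcongr
  calc |L / u - p ^ 2 / u ^ 2| ≤ |L / u| + |p ^ 2 / u ^ 2| := abs_sub _ _
    _ = L / u + p ^ 2 / u ^ 2 := by
      rw [abs_of_nonneg (by positivity), abs_of_nonneg (by positivity)]
    _ ≤ L ^ 2 / m + G ^ 2 * L ^ 2 / m ^ 2 := by
      gcongr
      · exact le_self_pow₀ hL two_ne_zero
      · exact hp2.trans (le_mul_of_one_le_right (sq_nonneg G) (one_le_pow₀ hL))
    _ = (1 / m + G ^ 2 / m ^ 2) * L ^ 2 := by ring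

lemma neg_le_mul_sub_div_sub_sq_div_sq {γ V V₀ y s z R K Z : ℝ} (hV₀ : 0 < V₀) (hV : V₀ ≤ V)
    (hy : |y| ≤ R) (hs : |s| ≤ K) (hz : |z| ≤ Z) (hL : 1 ≤ L) :
    -(|γ| * ((2 * (1 + R ^ 2) + 2 * K) / V₀ + 4 * Z ^ 2 / V₀ ^ 2) * L ^ 2)
      ≤ γ * (2 * (L ^ 2 * (1 + y ^ 2) - s * L) / V - (2 * (L * z)) ^ 2 / V ^ 2) := by
  have hV' : 0 < V := hV₀.trans_le hV
  have hy2 : y ^ 2 ≤ R ^ 2 := sq_le_sq.2 (hy.trans (le_abs_self R))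
  have hz2 : z ^ 2 ≤ Z ^ 2 := sq_le_sq.2 (hz.trans (le_abs_self Z))
  have hK : 0 ≤ K := (abs_nonneg s).trans hs
  refine (abs_le.1 ?_).1
  rw [abs_mul, mul_assoc]
  gcongr
  have hfirst : |2 * (L ^ 2 * (1 + y ^ 2) - s * L) / V|
      ≤ 2 * (L ^ 2 * (1 + y ^ 2) + |s| * L) / V := by
    rw [abs_div, abs_mul, abs_of_pos hV', abs_two]
    gcongr
    refine (abs_sub _ _).trans (le_of_eq ?_)
    rw [abs_mul s, abs_of_nonneg (show 0 ≤ L ^ 2 * (1 + y ^ 2) by positivity),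
      abs_of_nonneg (zero_le_one.trans hL)]
  have hsecond : |(2 * (L * z)) ^ 2 / V ^ 2| = 4 * z ^ 2 * L ^ 2 / V ^ 2 := by
    rw [abs_of_nonneg (by positivity)]
    ring
  calc |2 * (L ^ 2 * (1 + y ^ 2) - s * L) / V - (2 * (L * z)) ^ 2 / V ^ 2|
      ≤ 2 * (L ^ 2 * (1 + y ^ 2) + |s| * L) / V + 4 * z ^ 2 * L ^ 2 / V ^ 2 :=
        (abs_sub _ _).trans (add_le_add hfirst hsecond.le)
    _ ≤ 2 * (L ^ 2 * (1 + R ^ 2) + K * L ^ 2) / V₀ + 4 * Z ^ 2 * L ^ 2 / V₀ ^ 2 := by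
        gcongr
        exact le_self_pow₀ hL two_ne_zero
    _ = ((2 * (1 + R ^ 2) + 2 * K) / V₀ + 4 * Z ^ 2 / V₀ ^ 2) * L ^ 2 := by ring

end InteriorAlgebra

/-- The constants of the Robin problem on the ball `‖y‖ ≤ R`: bounds `m ≤ u ≤ K` for the solution,
a bound `B` for the jets of the inhomogeneity, and the exponents `P`, `γ` of the equation. -/
structure RobinBallData where
  (dim : ℕ) (R m K B P γ : ℝ)
  (R_pos : 0 < R) (m_pos : 0 < m) (K_pos : 0 < K) (B_nonneg : 0 ≤ B)

namespace RobinBallData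

variable (d : RobinBallData)

/-- The bound for `‖Du‖`. -/
def gradBound : ℝ := d.K / d.R

/-- The lower bound for `homogGradSq u`. -/
def homogGradSqLower : ℝ := d.m ^ 2 / (1 + d.R ^ 2)

/-- The coefficient `a` of `pogorelovTerm`, chosen so that `u ≤ a ‖y‖²` on the boundary sphere. -/
def slope : ℝ := d.K / d.R ^ 2

/-- The coefficient of `λ²`, for the largest eigenvalue `λ` of `D²u`, in the lower bound for the
terms of `pogorelov_interior_inequality` without the weight `β`. -/
def quadCoeff : ℝ :=
  d.B + |d.P| * (1 / d.m + d.gradBound ^ 2 / d.m ^ 2)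
    + |d.γ| * ((2 * (1 + d.R ^ 2) + 2 * d.K) / d.homogGradSqLower
      + 4 * (d.gradBound + d.K * d.R) ^ 2 / d.homogGradSqLower ^ 2)

/-- The error in the bound `λ - traceLoss` for the terms multiplied by `λ β` in
`pogorelov_interior_inequality`. -/
def traceLoss : ℝ :=
  d.dim * d.slope
    + (d.gradBound + d.slope * d.R) * (d.B + |d.P| * (d.gradBound / d.m))

/-- The weight `β` of `pogorelovTerm` in the test function; it exceeds `quadCoeff` by one. -/
def weight : ℝ := d.quadCoeff + 1

/-- The bound for the oscillation of the weighted `pogorelovTerm`. -/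
def oscillation : ℝ := d.weight * (1 / 2 * d.gradBound ^ 2 + d.slope * d.K)

/-- The factor of `1 + M` in the Hessian bound, where `M` is the double normal bound. -/
def hessBound : ℝ := (1 + d.weight * d.traceLoss) * Real.exp d.oscillation

lemma gradBound_pos : 0 < d.gradBound := div_pos d.K_pos d.R_pos

lemma homogGradSqLower_pos : 0 < d.homogGradSqLower := by
  have := d.m_pos
  unfold homogGradSqLower
  positivity

lemma slope_pos : 0 < d.slope := div_pos d.K_pos (pow_pos d.R_pos 2)

lemma weight_pos : 0 < d.weight := by
  have := d.m_pos
  have := d.K_pos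
  have := d.B_nonneg
  have := d.homogGradSqLower_pos
  unfold weight quadCoeff
  positivity

lemma traceLoss_nonneg : 0 ≤ d.traceLoss := by
  have := d.m_pos
  have := d.R_pos
  have := d.B_nonneg
  have := d.gradBound_pos
  have := d.slope_pos
  unfold traceLoss
  positivity

lemma hessBound_pos : 0 < d.hessBound := by
  have := d.weight_pos
  have := d.traceLoss_nonneg
  unfold hessBound
  positivity

end RobinBallData

/-- All first and second directional derivatives of `f` at `y` exist and are bounded by `B`. -/
def HasTwoJetBound {E : Type*} [NormedAddCommGroup E] [NormedSpace ℝ E] (f : E → ℝ) (B : ℝ)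
    (y : E) : Prop :=
  ∀ ζ, ∃ b c, HasTwoJetAt f ζ b c y ∧ |b| ≤ B * ‖ζ‖ ∧ |c| ≤ B * ‖ζ‖ ^ 2

/-- A strictly convex solution of the flat equation on the ball with the Robin condition
`⟨y, Du⟩ = u` on its boundary, satisfying the a priori bounds of `d`. -/
structure RobinBallSolution {E : Type*} [NormedAddCommGroup E] [InnerProductSpace ℝ E]
    [CompleteSpace E] (d : RobinBallData) (u Γ₀ : E → ℝ) : Prop where
  contDiff : ContDiff ℝ ∞ u
  lower : ∀ y : E, ‖y‖ ≤ d.R → d.m ≤ u y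
  upper : ∀ y : E, ‖y‖ ≤ d.R → u y ≤ d.K
  hess_pos : ∀ y : E, ‖y‖ ≤ d.R → ∀ ζ : E, ζ ≠ 0 → 0 < dirDeriv ζ (dirDeriv ζ u) y
  robin : ∀ y : E, ‖y‖ = d.R → dirDeriv y u y = u y
  jet : ∀ y : E, ‖y‖ < d.R → HasTwoJetBound Γ₀ d.B y
  equation : ∀ (v : OrthonormalBasis (Fin d.dim) ℝ E) (y : E), ‖y‖ < d.R →
    SolvesLogDetEqNear Γ₀ d.P d.γ u v y

namespace RobinBallSolution

variable {E : Type*} [NormedAddCommGroup E] [InnerProductSpace ℝ E] [CompleteSpace E]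
  {d : RobinBallData} {u Γ₀ : E → ℝ} {y : E}

lemma hess_nonneg (S : RobinBallSolution d u Γ₀) (hy : ‖y‖ ≤ d.R) (ζ : E) :
    0 ≤ dirDeriv ζ (dirDeriv ζ u) y := by
  rcases eq_or_ne ζ 0 with rfl | hζ
  · simp [dirDeriv]
  · exact (S.hess_pos y hy ζ hζ).le

lemma apply_zero_nonneg (S : RobinBallSolution d u Γ₀) : 0 ≤ u 0 :=
  d.m_pos.le.trans (S.lower 0 (by simpa using d.R_pos.le))

lemma norm_gradient_le (S : RobinBallSolution d u Γ₀) (hy : ‖y‖ ≤ d.R) :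
    ‖gradient u y‖ ≤ d.gradBound :=
  norm_gradient_le_of_robin S.contDiff d.R_pos S.apply_zero_nonneg S.upper
    (fun _ hz => S.hess_nonneg hz) S.robin hy

lemma negLegendre_mem_Icc (S : RobinBallSolution d u Γ₀) (hy : ‖y‖ ≤ d.R) :
    negLegendre u y ∈ Icc 0 d.K :=
  ⟨negLegendre_nonneg S.contDiff S.apply_zero_nonneg (fun _ hz => S.hess_nonneg hz) S.robin hy,
    (negLegendre_le S.contDiff (fun _ hz => S.hess_nonneg hz) hy).trans
      (S.upper 0 (by simpa using d.R_pos.le))⟩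

lemma pogorelovTerm_mem_Icc (S : RobinBallSolution d u Γ₀) (hy : ‖y‖ ≤ d.R) :
    pogorelovTerm d.slope u y ∈ Icc 0 (1 / 2 * d.gradBound ^ 2 + d.slope * d.K) := by
  obtain ⟨hnonneg, hle⟩ := S.negLegendre_mem_Icc hy
  have hgrad := S.norm_gradient_le hy
  have := d.slope_pos
  unfold pogorelovTerm
  exact ⟨by positivity, by gcongr⟩

lemma homogGradSqLower_le (S : RobinBallSolution d u Γ₀) (hy : ‖y‖ ≤ d.R) :
    d.homogGradSqLower ≤ homogGradSq u y := by
  set g := ‖gradient u y‖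
  set s := negLegendre u y with hs
  have : 0 ≤ s := (S.negLegendre_mem_Icc hy).1
  have hradial : dirDeriv y u y ≤ g * d.R := by
    rw [← inner_gradient_eq_dirDeriv]
    exact (real_inner_le_norm _ _).trans (by gcongr)
  have hm : d.m ≤ g * d.R + s := by
    rw [hs, negLegendre]
    linarith [S.lower y hy]
  have hcauchy : (g * d.R + s) ^ 2 ≤ (g ^ 2 + s ^ 2) * (1 + d.R ^ 2) := by
    linarith [sq_nonneg (g - s * d.R)]
  rw [RobinBallData.homogGradSqLower, div_le_iff₀ (by positivity)]
  exact (pow_le_pow_left₀ d.m_pos.le hm 2).trans hcauchy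

lemma norm_gradient_sub_le (S : RobinBallSolution d u Γ₀) (hy : ‖y‖ ≤ d.R) {a c : ℝ}
    (ha : |a| ≤ c) : ‖gradient u y - a • y‖ ≤ d.gradBound + c * d.R := by
  refine (norm_sub_le _ _).trans (add_le_add (S.norm_gradient_le hy) ?_)
  rw [norm_smul, norm_eq_abs]
  have := d.R_pos
  have : 0 ≤ c := (abs_nonneg a).trans ha
  gcongr

lemma neg_le_zeroOrder_terms (S : RobinBallSolution d u Γ₀) (hy : ‖y‖ < d.R) {X₁ X₂ : ℝ}
    (hX : HasTwoJetAt Γ₀ (gradient u y - d.slope • y) X₁ X₂ y) :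
    -((d.gradBound + d.slope * d.R) * (d.B + |d.P| * (d.gradBound / d.m)))
      ≤ X₁ + d.P * (dirDeriv (gradient u y - d.slope • y) u y / u y) := by
  set X := gradient u y - d.slope • y
  obtain ⟨b, c, hjet, hb, -⟩ := S.jet y hy X
  rw [(hjet.unique hX).1] at hb
  have hXnorm : ‖X‖ ≤ d.gradBound + d.slope * d.R :=
    S.norm_gradient_sub_le hy.le (abs_of_pos d.slope_pos).le
  have hu := S.lower y hy.le
  have hu0 := d.m_pos.trans_le hu
  have hm := d.m_pos
  have hB := d.B_nonneg
  have hG := d.gradBound_pos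
  have hdir : |dirDeriv X u y| ≤ d.gradBound * ‖X‖ := by
    rw [← inner_gradient_eq_dirDeriv]
    exact (abs_real_inner_le_norm _ _).trans (by gcongr; exact S.norm_gradient_le hy.le)
  refine (abs_le.1 ?_).1
  calc |X₁ + d.P * (dirDeriv X u y / u y)| ≤ |X₁| + |d.P| * (|dirDeriv X u y| / u y) := by
        simpa [abs_mul, abs_div, abs_of_pos hu0] using abs_add_le X₁ (d.P * (dirDeriv X u y / u y))
    _ ≤ d.B * ‖X‖ + |d.P| * (d.gradBound * ‖X‖ / d.m) := by gcongr
    _ = ‖X‖ * (d.B + |d.P| * (d.gradBound / d.m)) := by ring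
    _ ≤ _ := by gcongr

lemma neg_le_unweighted_terms (S : RobinBallSolution d u Γ₀) (hy : ‖y‖ < d.R) {e : E}
    (he : ‖e‖ = 1) {F₁ F₂ : ℝ} (hF : HasTwoJetAt Γ₀ e F₁ F₂ y) {L : ℝ} (hL : 1 ≤ L) :
    -(d.quadCoeff * L ^ 2) ≤ F₂ + d.P * (L / u y - dirDeriv e u y ^ 2 / u y ^ 2)
      + d.γ * (2 * (L ^ 2 * (1 + ⟪e, y⟫ ^ 2) - negLegendre u y * L) / homogGradSq u y
        - (2 * (L * ⟪e, gradient u y - negLegendre u y • y⟫)) ^ 2 / homogGradSq u y ^ 2) := by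
  obtain ⟨b, c, hjet, -, hc⟩ := S.jet y hy e
  rw [(hjet.unique hF).2, he, one_pow, mul_one] at hc
  have hs : |negLegendre u y| ≤ d.K := by
    rw [abs_of_nonneg (S.negLegendre_mem_Icc hy.le).1]
    exact (S.negLegendre_mem_Icc hy.le).2
  have hinner (x : E) : |⟪e, x⟫| ≤ ‖x‖ := by simpa [he] using abs_real_inner_le_norm e x
  have hpower := neg_le_mul_div_sub_sq_div_sq (P := d.P) d.m_pos (S.lower y hy.le)
    (p := dirDeriv e u y) (G := d.gradBound) (by
      rw [← inner_gradient_eq_dirDeriv, real_inner_comm]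
      exact (hinner _).trans (S.norm_gradient_le hy.le)) hL
  have hgradient := neg_le_mul_sub_div_sub_sq_div_sq (γ := d.γ) d.homogGradSqLower_pos
    (S.homogGradSqLower_le hy.le) ((hinner y).trans hy.le) hs
    ((hinner _).trans (S.norm_gradient_sub_le hy.le hs)) hL
  have hF₂ : -(d.B * L ^ 2) ≤ F₂ :=
    (neg_le_neg (le_mul_of_one_le_right d.B_nonneg (one_le_pow₀ hL))).trans (abs_le.1 hc).1
  rw [RobinBallData.quadCoeff]
  linarith

lemma eigenvalue_le_of_interior_max (S : RobinBallSolution d u Γ₀) (hy : ‖y‖ < d.R)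
    {v : OrthonormalBasis (Fin d.dim) ℝ E} {lam : Fin d.dim → ℝ}
    (hdiag : hessMatrix u v y = Matrix.diagonal lam) (hlam : ∀ a, 0 < lam a) {k : Fin d.dim}
    (hmax : IsLocalMax (fun x => Real.log (dirDeriv (v k) (dirDeriv (v k) u) x)
      + d.weight * pogorelovTerm d.slope u x) y) :
    lam k ≤ max 1 (d.weight * d.traceLoss) := by
  rcases le_total (lam k) 1 with hsmall | hL
  · exact hsmall.trans (le_max_left _ _)
  refine le_max_of_le_right ?_
  obtain ⟨F₁, F₂, hF, -⟩ := S.jet y hy (v k)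
  obtain ⟨X₁, X₂, hX, -⟩ := S.jet y hy (gradient u y - d.slope • y)
  have hinterior := pogorelov_interior_inequality S.contDiff hdiag hlam
    (d.m_pos.trans_le (S.lower y hy.le)).ne'
    (d.homogGradSqLower_pos.trans_le (S.homogGradSqLower_le hy.le)).ne'
    (S.equation v y hy) hF hX hmax
  have hunweighted := S.neg_le_unweighted_terms hy (v.norm_eq_one k) hF hL
  have hzeroOrder := S.neg_le_zeroOrder_terms hy hX
  have htrace : lam k ≤ ∑ b, lam b :=
    Finset.single_le_sum (fun b _ => (hlam b).le) (Finset.mem_univ k)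
  have hweighted : lam k * (d.weight * (lam k - d.traceLoss))
      ≤ lam k * (d.weight * (∑ b, lam b - Fintype.card (Fin d.dim) * d.slope + X₁
        + d.P * (dirDeriv (gradient u y - d.slope • y) u y / u y))) := by
    have := d.weight_pos
    have := hlam k
    gcongr
    rw [Fintype.card_fin, RobinBallData.traceLoss]
    linarith
  have hprod : lam k * (lam k - d.weight * d.traceLoss) ≤ 0 := by
    have hweight : d.weight = d.quadCoeff + 1 := rfl
    linear_combination hinterior + hunweighted + hweighted - lam k ^ 2 * hweight
  exact sub_nonpos.1 (nonpos_of_mul_nonpos_right hprod (hlam k))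

end RobinBallSolution

section EigenFrame

variable {E : Type*} [NormedAddCommGroup E] [InnerProductSpace ℝ E] {u : E → ℝ}

lemma dirDeriv_dirDeriv_le_of_hessMatrix_eq_diagonal {ι : Type*} [Fintype ι] [DecidableEq ι]
    {v : OrthonormalBasis ι ℝ E} {lam : ι → ℝ} {y : E} (hu : ContDiff ℝ ∞ u)
    (hdiag : hessMatrix u v y = Matrix.diagonal lam) {k : ι} (hk : ∀ a, lam a ≤ lam k) (ζ : E) :
    dirDeriv ζ (dirDeriv ζ u) y ≤ lam k * ‖ζ‖ ^ 2 := by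
  rw [dirDeriv_eq_sum v, ← v.sum_sq_inner_right ζ, Finset.mul_sum]
  refine Finset.sum_le_sum fun a _ => ?_
  rw [dirDeriv_basis_dirDeriv hu hdiag]
  linarith [mul_le_mul_of_nonneg_right (hk a) (sq_nonneg ⟪v a, ζ⟫)]

variable [FiniteDimensional ℝ E] {n : ℕ}

lemma exists_hessMatrix_eq_diagonal (hE : finrank ℝ E = n) (hu : ContDiff ℝ ∞ u) (y : E) :
    ∃ (v : OrthonormalBasis (Fin n) ℝ E) (lam : Fin n → ℝ),
      hessMatrix u v y = Matrix.diagonal lam := by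
  have := FiniteDimensional.complete ℝ E
  let A : E →ₗ[ℝ] E := (InnerProductSpace.toDual ℝ E).symm.toLinearMap ∘ₗ
    (fderiv ℝ (fderiv ℝ u) y).toLinearMap
  have hA (x z : E) : ⟪A x, z⟫ = dirDeriv x (dirDeriv z u) y := by
    rw [dirDeriv_dirDeriv hu]
    exact InnerProductSpace.toDual_symm_apply
  have hsym : A.IsSymmetric := fun x z => by
    rw [hA, real_inner_comm, hA, dirDeriv_comm hu]
  refine ⟨hsym.eigenvectorBasis hE, hsym.eigenvalues hE, ?_⟩
  ext a b
  rw [hessMatrix, Matrix.of_apply, ← hA, hsym.apply_eigenvectorBasis, inner_smul_left,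
    orthonormal_iff_ite.1 (hsym.eigenvectorBasis hE).orthonormal]
  simp [Matrix.diagonal_apply]

lemma exists_eigenframe_forall_mul_exp_le [Nontrivial E] (hE : finrank ℝ E = n)
    (hu : ContDiff ℝ ∞ u) {φ : E → ℝ} (hφ : Continuous φ) {s : Set E} (hs : IsCompact s)
    (hne : s.Nonempty) :
    ∃ y₀ ∈ s, ∃ (v : OrthonormalBasis (Fin n) ℝ E) (lam : Fin n → ℝ) (k : Fin n),
      hessMatrix u v y₀ = Matrix.diagonal lam ∧
      ∀ y ∈ s, ∀ ζ, ‖ζ‖ = 1 →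
        dirDeriv ζ (dirDeriv ζ u) y * Real.exp (φ y) ≤ lam k * Real.exp (φ y₀) := by
  have hcont : Continuous fun z : E × E =>
      dirDeriv z.2 (dirDeriv z.2 u) z.1 * Real.exp (φ z.1) := by
    have hu' : Continuous (fderiv ℝ (fderiv ℝ u)) :=
      (hu.fderiv_right (m := ∞) (by simp)).continuous_fderiv (by simp)
    simp only [dirDeriv_dirDeriv hu]
    fun_prop
  obtain ⟨ζ₁, hζ₁⟩ := exists_norm_eq E zero_le_one
  obtain ⟨y₁, hy₁⟩ := hne
  have := FiniteDimensional.proper_real E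
  obtain ⟨⟨y₀, ζ₀⟩, ⟨hy₀, hζ₀⟩, hmax⟩ := (hs.prod (isCompact_sphere (0 : E) 1)).exists_isMaxOn
    ⟨(y₁, ζ₁), hy₁, by simpa using hζ₁⟩ hcont.continuousOn
  obtain ⟨v, lam, hdiag⟩ := exists_hessMatrix_eq_diagonal hE hu y₀
  have : NeZero n := ⟨hE ▸ finrank_pos.ne'⟩
  obtain ⟨k, hk⟩ := Finite.exists_max lam
  refine ⟨y₀, hy₀, v, lam, k, hdiag, fun y hy ζ hζ => ?_⟩
  refine (hmax (show (y, ζ) ∈ s ×ˢ Metric.sphere 0 1 from ⟨hy, by simpa using hζ⟩)).trans ?_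
  have htop := dirDeriv_dirDeriv_le_of_hessMatrix_eq_diagonal hu hdiag hk ζ₀
  rw [mem_sphere_zero_iff_norm.1 hζ₀, one_pow, mul_one] at htop
  dsimp only
  gcongr

end EigenFrame

lemma continuous_pogorelovTerm {E : Type*} [NormedAddCommGroup E] [InnerProductSpace ℝ E]
    [CompleteSpace E] {u : E → ℝ} (hu : ContDiff ℝ ∞ u) (a : ℝ) :
    Continuous (pogorelovTerm a u) := by
  have := (contDiff_gradient hu).continuous
  have := (contDiff_negLegendre hu).continuous
  unfold pogorelovTerm
  fun_prop

namespace RobinBallSolution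

variable {E : Type*} [NormedAddCommGroup E] [InnerProductSpace ℝ E] [CompleteSpace E]
  {d : RobinBallData} {u Γ₀ : E → ℝ} {y : E}

lemma eigenvalue_le_of_max (S : RobinBallSolution d u Γ₀) {M : ℝ} (hM : 0 ≤ M)
    (hbdry : ∀ z : E, ‖z‖ = d.R → dirDeriv z (dirDeriv z u) z ≤ M * d.R ^ 2) (hy : ‖y‖ ≤ d.R)
    {v : OrthonormalBasis (Fin d.dim) ℝ E} {lam : Fin d.dim → ℝ}
    (hdiag : hessMatrix u v y = Matrix.diagonal lam) {k : Fin d.dim}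
    (hmax : IsMaxOn (fun x => Real.log (dirDeriv (v k) (dirDeriv (v k) u) x)
      + d.weight * pogorelovTerm d.slope u x) (Metric.closedBall 0 d.R) y) :
    lam k ≤ (1 + d.weight * d.traceLoss) * (1 + M) := by
  have hlam (a : Fin d.dim) : 0 < lam a := by
    have := S.hess_pos y hy (v a) (v.orthonormal.ne_zero a)
    rwa [dirDeriv_dirDeriv_of_hessMatrix_eq_diagonal hdiag, if_pos rfl] at this
  have hloss : 0 ≤ d.weight * d.traceLoss := mul_nonneg d.weight_pos.le d.traceLoss_nonneg
  have hlossM := mul_nonneg hloss hM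
  rcases hy.lt_or_eq with hlt | heq
  · have hball : Metric.closedBall (0 : E) d.R ∈ 𝓝 y :=
      mem_of_superset (Metric.isOpen_ball.mem_nhds (mem_ball_zero_iff.2 hlt))
        Metric.ball_subset_closedBall
    refine (S.eigenvalue_le_of_interior_max hlt hdiag hlam (hmax.isLocalMax hball)).trans ?_
    exact max_le (by linarith) (by linarith)
  · have hR : ‖y‖ ^ 2 ≠ 0 := by rw [heq]; exact (pow_pos d.R_pos 2).ne'
    have hslope : u y ≤ d.slope * ‖y‖ ^ 2 := by
      rw [RobinBallData.slope, ← heq, div_mul_cancel₀ _ hR]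
      exact S.upper y hy
    rw [← heq] at hmax
    have hle := eigenvalue_le_of_boundary_max S.contDiff (fun h => hR (by simp [h]))
      (fun z hz => S.robin z (hz.trans heq)) hdiag (hlam k) d.weight_pos.le hslope
      (S.hess_nonneg hy y) hmax
    have hdouble := div_le_of_le_mul₀ (sq_nonneg _) hM (heq ▸ hbdry y heq)
    linarith

lemma exists_hess_mul_exp_le [FiniteDimensional ℝ E] [Nontrivial E] (hE : finrank ℝ E = d.dim)
    (S : RobinBallSolution d u Γ₀) {M : ℝ} (hM : 0 ≤ M)
    (hbdry : ∀ z : E, ‖z‖ = d.R → dirDeriv z (dirDeriv z u) z ≤ M * d.R ^ 2) :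
    ∃ y₀ : E, ‖y₀‖ ≤ d.R ∧ ∀ y : E, ‖y‖ ≤ d.R → ∀ ζ : E, ‖ζ‖ = 1 →
      dirDeriv ζ (dirDeriv ζ u) y * Real.exp (d.weight * pogorelovTerm d.slope u y)
        ≤ (1 + d.weight * d.traceLoss) * (1 + M)
          * Real.exp (d.weight * pogorelovTerm d.slope u y₀) := by
  obtain ⟨y₀, hy₀, v, lam, k, hdiag, hmax⟩ := exists_eigenframe_forall_mul_exp_le hE S.contDiff
    (continuous_const.mul (continuous_pogorelovTerm S.contDiff d.slope) :
      Continuous fun x => d.weight * pogorelovTerm d.slope u x)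
    (FiniteDimensional.proper_real E |>.isCompact_closedBall 0 d.R)
    (Metric.nonempty_closedBall.2 d.R_pos.le)
  have hlamk : dirDeriv (v k) (dirDeriv (v k) u) y₀ = lam k := by
    rw [dirDeriv_dirDeriv_of_hessMatrix_eq_diagonal hdiag, if_pos rfl]
  have hlogmax : IsMaxOn (fun x => Real.log (dirDeriv (v k) (dirDeriv (v k) u) x)
      + d.weight * pogorelovTerm d.slope u x) (Metric.closedBall 0 d.R) y₀ := fun x hx => by
    have hpos := S.hess_pos x (mem_closedBall_zero_iff.1 hx) (v k) (v.orthonormal.ne_zero k)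
    have hpos₀ := S.hess_pos y₀ (mem_closedBall_zero_iff.1 hy₀) (v k) (v.orthonormal.ne_zero k)
    have := Real.log_le_log (by positivity) (hmax x hx (v k) (v.norm_eq_one k))
    rw [← hlamk] at this
    rwa [Real.log_mul hpos.ne' (Real.exp_pos _).ne', Real.log_mul hpos₀.ne' (Real.exp_pos _).ne',
      Real.log_exp, Real.log_exp] at this
  rw [mem_closedBall_zero_iff] at hy₀
  refine ⟨y₀, hy₀, fun y hy ζ hζ => (hmax y (mem_closedBall_zero_iff.2 hy) ζ hζ).trans ?_⟩
  exact mul_le_mul_of_nonneg_right (S.eigenvalue_le_of_max hM hbdry hy₀ hdiag hlogmax)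
    (Real.exp_pos _).le

lemma hess_le_of_norm_eq_one [FiniteDimensional ℝ E] [Nontrivial E] (hE : finrank ℝ E = d.dim)
    (S : RobinBallSolution d u Γ₀) {M : ℝ} (hM : 0 ≤ M)
    (hbdry : ∀ z : E, ‖z‖ = d.R → dirDeriv z (dirDeriv z u) z ≤ M * d.R ^ 2)
    (hy : ‖y‖ ≤ d.R) {ζ : E} (hζ : ‖ζ‖ = 1) :
    dirDeriv ζ (dirDeriv ζ u) y ≤ d.hessBound * (1 + M) := by
  obtain ⟨y₀, hy₀, hmax⟩ := S.exists_hess_mul_exp_le hE hM hbdry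
  have hweight := d.weight_pos
  have hloss := d.traceLoss_nonneg
  have hterm : 1 ≤ Real.exp (d.weight * pogorelovTerm d.slope u y) :=
    Real.one_le_exp (mul_nonneg hweight.le (S.pogorelovTerm_mem_Icc hy).1)
  calc dirDeriv ζ (dirDeriv ζ u) y
      ≤ dirDeriv ζ (dirDeriv ζ u) y * Real.exp (d.weight * pogorelovTerm d.slope u y) :=
        le_mul_of_one_le_right (S.hess_nonneg hy ζ) hterm
    _ ≤ (1 + d.weight * d.traceLoss) * (1 + M)
          * Real.exp (d.weight * pogorelovTerm d.slope u y₀) := hmax y hy ζ hζ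
    _ ≤ (1 + d.weight * d.traceLoss) * (1 + M) * Real.exp d.oscillation := by
        gcongr
        exact mul_le_mul_of_nonneg_left (S.pogorelovTerm_mem_Icc hy₀).2 hweight.le
    _ = d.hessBound * (1 + M) := by rw [RobinBallData.hessBound]; ring

theorem hess_le [FiniteDimensional ℝ E] [Nontrivial E] (hE : finrank ℝ E = d.dim)
    (S : RobinBallSolution d u Γ₀) {M : ℝ} (hM : 0 ≤ M)
    (hbdry : ∀ z : E, ‖z‖ = d.R → dirDeriv z (dirDeriv z u) z ≤ M * d.R ^ 2)
    (hy : ‖y‖ ≤ d.R) (ζ : E) :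
    dirDeriv ζ (dirDeriv ζ u) y ≤ d.hessBound * (1 + M) * ‖ζ‖ ^ 2 := by
  rcases eq_or_ne ζ 0 with rfl | hζ
  · simp [dirDeriv]
  rw [← div_le_iff₀ (by positivity)]
  have hunit := S.hess_le_of_norm_eq_one hE hM hbdry hy (norm_smul_inv_norm (𝕜 := ℝ) hζ)
  rwa [dirDeriv_dirDeriv_smul S.contDiff, RCLike.ofReal_real_eq_id, id, inv_pow,
    inv_mul_eq_div] at hunit

end RobinBallSolution

section CapGeometry

variable {n : ℕ} {θ : ℝ} {ξ : Euc n}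

lemma norm_eVec : ‖eVec n‖ = 1 := by simp [eVec]

lemma inner_eVec_eq_neg_last (x : Euc n) : ⟪x, eVec n⟫ = -x (Fin.last n) := by
  simp [eVec, EuclideanSpace.inner_single_right]

lemma inner_sphNormal_eVec (θ : ℝ) (ξ : Euc n) :
    ⟪sphNormal n θ ξ, eVec n⟫ = -(ξ (Fin.last n) + cos θ) := by
  rw [sphNormal, inner_sub_left, real_inner_smul_left, real_inner_self_eq_norm_sq, norm_eVec,
    inner_eVec_eq_neg_last]
  ring

lemma inner_sphNormal_eVec_of_mem_capBdry (hξ : ξ ∈ capBdry n θ) :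
    ⟪sphNormal n θ ξ, eVec n⟫ = -cos θ := by
  rw [inner_sphNormal_eVec, hξ.1, zero_add]

lemma tproj_apply (θ : ℝ) (ξ X : Euc n) :
    tproj n θ ξ X = X - ⟪sphNormal n θ ξ, X⟫ • sphNormal n θ ξ := by
  simp [tproj]

lemma inner_tproj_left (θ : ℝ) (ξ X Z : Euc n) :
    ⟪tproj n θ ξ X, Z⟫ = ⟪X, tproj n θ ξ Z⟫ := by
  rw [tproj_apply, tproj_apply, inner_sub_left, inner_sub_right, real_inner_smul_left,
    real_inner_smul_right, real_inner_comm X]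
  ring

lemma tproj_sphNormal (hν : ‖sphNormal n θ ξ‖ = 1) : tproj n θ ξ (sphNormal n θ ξ) = 0 := by
  rw [tproj_apply, real_inner_self_eq_norm_sq, hν, one_pow, one_smul, sub_self]

lemma isTangent_tproj (hν : ‖sphNormal n θ ξ‖ = 1) (X : Euc n) :
    IsTangent n θ ξ (tproj n θ ξ X) := by
  rw [IsTangent, inner_tproj_left, tproj_sphNormal hν, inner_zero_right]

lemma tproj_of_isTangent {X : Euc n} (hX : IsTangent n θ ξ X) : tproj n θ ξ X = X := by
  rw [tproj_apply, real_inner_comm, hX, zero_smul, sub_zero]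

lemma inner_tproj_tproj (hν : ‖sphNormal n θ ξ‖ = 1) (X Z : Euc n) :
    ⟪tproj n θ ξ X, tproj n θ ξ Z⟫ = ⟪tproj n θ ξ X, Z⟫ := by
  rw [← inner_tproj_left, tproj_of_isTangent (isTangent_tproj hν X)]

lemma norm_tproj_le (hν : ‖sphNormal n θ ξ‖ = 1) (X : Euc n) : ‖tproj n θ ξ X‖ ≤ ‖X‖ := by
  have hsq : ‖tproj n θ ξ X‖ ^ 2 ≤ ‖tproj n θ ξ X‖ * ‖X‖ := by
    rw [← real_inner_self_eq_norm_sq, inner_tproj_tproj hν]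
    exact real_inner_le_norm _ _
  by_contra! hlt
  nlinarith [norm_nonneg X]

lemma conormal_eq_cot_smul_add (hs : sin θ ≠ 0) (ξ : Euc n) :
    conormal n θ ξ = cot θ • sphNormal n θ ξ + (sin θ)⁻¹ • eVec n := by
  have hinv : (sin θ)⁻¹ = cot θ * cos θ + sin θ := by
    rw [Real.cot_eq_cos_div_sin]
    field_simp
    linarith [Real.sin_sq_add_cos_sq θ]
  rw [hinv, conormal, sphNormal]
  module

lemma inner_conormal_self (hs : sin θ ≠ 0) (hξ : ξ ∈ capBdry n θ) :
    ⟪conormal n θ ξ, conormal n θ ξ⟫ = 1 := by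
  have he := inner_sphNormal_eVec_of_mem_capBdry hξ
  rw [conormal_eq_cot_smul_add hs, real_inner_self_eq_norm_sq, norm_add_sq_real, norm_smul,
    norm_smul, hξ.2, norm_eVec, real_inner_smul_left, real_inner_smul_right, he, mul_one, mul_one,
    Real.norm_eq_abs, Real.norm_eq_abs, sq_abs, sq_abs, Real.cot_eq_cos_div_sin]
  field_simp
  linarith [Real.sin_sq_add_cos_sq θ]

lemma isCompact_capBdry (n : ℕ) (θ : ℝ) : IsCompact (capBdry n θ) := by
  refine Metric.isCompact_of_isClosed_isBounded ?_
    ((Metric.isBounded_closedBall (x := cos θ • eVec n) (r := 1)).subset fun ξ hξ => ?_)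
  · exact (isClosed_eq (by fun_prop) continuous_const).inter
      (isClosed_eq (by unfold sphNormal; fun_prop) continuous_const)
  · rw [mem_closedBall_iff_norm]
    exact hξ.2.le

end CapGeometry

section Derivatives

variable {n : ℕ} {θ : ℝ} {ξ : Euc n} {g : Euc n → ℝ}

lemma shess_smul_smul (θ : ℝ) (g : Euc n → ℝ) (ξ X Y : Euc n) (a b : ℝ) :
    shess n θ g ξ (a • X) (b • Y) = a * b * shess n θ g ξ X Y := by
  simp only [shess, map_smul, real_inner_smul_left, real_inner_smul_right]
  ring

lemma bddAbove_abs_shess_conormal (θ : ℝ) (hg : ContDiff ℝ ∞ g) :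
    BddAbove ((fun η => |shess n θ g η (conormal n θ η) (conormal n θ η)|) '' capBdry n θ) := by
  have hgrad := contDiff_gradient hg
  have hcon : Continuous (conormal n θ) := by unfold conormal; fun_prop
  have hν : Continuous (sphNormal n θ) := by unfold sphNormal; fun_prop
  have hhess := (hgrad.continuous_fderiv (by simp)).clm_apply hcon
  refine ((isCompact_capBdry n θ).image ?_).bddAbove
  unfold shess
  exact ((hhess.inner hcon).sub ((hgrad.continuous.inner hν).mul (hcon.inner hcon))).abs

lemma inner_hessOp (hν : ‖sphNormal n θ ξ‖ = 1) (g : Euc n → ℝ) (X Z : Euc n) :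
    ⟪X, hessOp n θ g ξ Z⟫ = shess n θ g ξ (tproj n θ ξ Z) (tproj n θ ξ X)
      + g ξ * ⟪tproj n θ ξ Z, tproj n θ ξ X⟫ + ⟪sphNormal n θ ξ, X⟫ * ⟪sphNormal n θ ξ, Z⟫ := by
  simp only [hessOp, thessOp, normalPart, shess, _root_.add_apply, _root_.sub_apply,
    _root_.smul_apply, ContinuousLinearMap.comp_apply, ContinuousLinearMap.smulRight_apply,
    innerSL_apply_apply, inner_add_right, inner_sub_right, real_inner_smul_right]
  rw [inner_tproj_tproj hν, real_inner_comm _ X, inner_tproj_left, real_inner_comm _ X,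
    real_inner_comm _ X]
  ring

/-- The point `∇g + g ν` of the hypersurface with support function `g`, at the normal `ν(ξ)`. -/
def supportPoint (θ : ℝ) (g : Euc n → ℝ) (ξ : Euc n) : Euc n :=
  sgrad n θ g ξ + g ξ • sphNormal n θ ξ

lemma supportPoint_eq_gradient_add (θ : ℝ) (g : Euc n → ℝ) (ξ : Euc n) :
    supportPoint θ g ξ = gradient g ξ
      + (g ξ - ⟪sphNormal n θ ξ, gradient g ξ⟫) • sphNormal n θ ξ := by
  rw [supportPoint, sgrad, tproj_apply]
  module

lemma inner_sgrad_sphNormal (hν : ‖sphNormal n θ ξ‖ = 1) (g : Euc n → ℝ) :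
    ⟪sgrad n θ g ξ, sphNormal n θ ξ⟫ = 0 := isTangent_tproj hν _

lemma inner_supportPoint_sphNormal (hν : ‖sphNormal n θ ξ‖ = 1) (g : Euc n → ℝ) :
    ⟪supportPoint θ g ξ, sphNormal n θ ξ⟫ = g ξ := by
  rw [supportPoint, inner_add_left, inner_sgrad_sphNormal hν, real_inner_smul_left,
    real_inner_self_eq_norm_sq, hν]
  ring

lemma norm_supportPoint_sq (hν : ‖sphNormal n θ ξ‖ = 1) (g : Euc n → ℝ) :
    ‖supportPoint θ g ξ‖ ^ 2 = g ξ ^ 2 + ‖sgrad n θ g ξ‖ ^ 2 := by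
  rw [supportPoint, norm_add_sq_real, real_inner_smul_right, inner_sgrad_sphNormal hν, norm_smul,
    hν, mul_one, Real.norm_eq_abs, sq_abs]
  ring

lemma norm_supportPoint_le (hν : ‖sphNormal n θ ξ‖ = 1) (g : Euc n → ℝ) :
    ‖supportPoint θ g ξ‖ ≤ ‖sgrad n θ g ξ‖ + |g ξ| := by
  refine (norm_add_le _ _).trans_eq ?_
  rw [norm_smul, hν, mul_one, Real.norm_eq_abs]

lemma inner_supportPoint_eVec_of_robinBC (hs : sin θ ≠ 0) (hbc : RobinBC n θ g)
    (hξ : ξ ∈ capBdry n θ) : ⟪supportPoint θ g ξ, eVec n⟫ = 0 := by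
  have hrobin := hbc ξ hξ
  rw [conormal_eq_cot_smul_add hs, inner_add_right, real_inner_smul_right, real_inner_smul_right,
    inner_sgrad_sphNormal hξ.2, Real.cot_eq_cos_div_sin] at hrobin
  rw [supportPoint, inner_add_left, real_inner_smul_left, inner_sphNormal_eVec_of_mem_capBdry hξ]
  field_simp at hrobin
  linarith

end Derivatives

section UnitVector

variable {F : Type*} [NormedAddCommGroup F] [InnerProductSpace ℝ F] {c : ℝ → F} {c' : F} {t : ℝ}

lemma hasDerivAt_norm_curve (hc : HasDerivAt c c' t) (h0 : c t ≠ 0) :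
    HasDerivAt (fun t => ‖c t‖) ⟪‖c t‖⁻¹ • c t, c'⟫ t := by
  have hsqrt := hc.norm_sq.sqrt (by simpa using h0)
  simp only [Real.sqrt_sq (norm_nonneg _)] at hsqrt
  refine hsqrt.congr_deriv ?_
  rw [real_inner_smul_left]
  field_simp

lemma hasDerivAt_inv_norm_smul (hc : HasDerivAt c c' t) (h0 : c t ≠ 0) :
    HasDerivAt (fun t => ‖c t‖⁻¹ • c t)
      (‖c t‖⁻¹ • (c' - ⟪‖c t‖⁻¹ • c t, c'⟫ • (‖c t‖⁻¹ • c t))) t := by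
  refine (((hasDerivAt_norm_curve hc h0).inv (norm_ne_zero_iff.2 h0)).smul hc).congr_deriv ?_
  rw [Pi.inv_apply, smul_sub, smul_smul, smul_smul, sub_eq_add_neg, ← neg_smul]
  congr 2
  ring

end UnitVector

section Gnomonic

/-- The horizontal hyperplane `e^⊥ = ℝⁿ` through the origin, on which the flat problem lives. -/
abbrev Hyperplane (n : ℕ) : Type := ↥((ℝ ∙ eVec n)ᗮ)

variable {n : ℕ}

/-- The translate of `y` to the hyperplane at height one, tangent to the unit sphere. -/
def liftHyperplane (y : Hyperplane n) : Euc n := (y : Euc n) - eVec n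

/-- The gnomonic (central) projection of the hyperplane onto the open hemisphere of the unit sphere
about `cos θ • e` that contains the cap. -/
def gnomonic (θ : ℝ) (y : Hyperplane n) : Euc n :=
  ‖liftHyperplane y‖⁻¹ • liftHyperplane y + cos θ • eVec n

/-- The restriction to the hyperplane at height one of the 1-homogeneous extension of `g`. -/
def gnomonicPullback (θ : ℝ) (g : Euc n → ℝ) (y : Hyperplane n) : ℝ :=
  ‖liftHyperplane y‖ * g (gnomonic θ y)

lemma finrank_hyperplane : finrank ℝ (Hyperplane n) = n := by
  have : Fact (finrank ℝ (Euc n) = n + 1) := ⟨by simp⟩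
  refine Submodule.finrank_orthogonal_span_singleton (norm_ne_zero_iff.1 ?_)
  rw [norm_eVec]
  exact one_ne_zero

lemma inner_hyperplane_eVec (y : Hyperplane n) : ⟪(y : Euc n), eVec n⟫ = 0 :=
  Submodule.mem_orthogonal_singleton_iff_inner_left.1 y.2

lemma coe_eq_liftHyperplane_add (y : Hyperplane n) :
    (y : Euc n) = liftHyperplane y + eVec n := by
  rw [liftHyperplane, sub_add_cancel]

lemma inner_liftHyperplane_eVec (y : Hyperplane n) : ⟪liftHyperplane y, eVec n⟫ = -1 := by
  rw [liftHyperplane, inner_sub_left, inner_hyperplane_eVec, real_inner_self_eq_norm_sq, norm_eVec]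
  norm_num

lemma norm_liftHyperplane_sq (y : Hyperplane n) : ‖liftHyperplane y‖ ^ 2 = 1 + ‖y‖ ^ 2 := by
  rw [liftHyperplane, norm_sub_sq_real, inner_hyperplane_eVec, norm_eVec, Submodule.coe_norm]
  ring

lemma one_le_norm_liftHyperplane (y : Hyperplane n) : 1 ≤ ‖liftHyperplane y‖ := by
  rw [← one_le_sq_iff₀ (norm_nonneg _), norm_liftHyperplane_sq]
  exact le_add_of_nonneg_right (sq_nonneg _)

lemma norm_liftHyperplane_pos (y : Hyperplane n) : 0 < ‖liftHyperplane y‖ :=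
  one_pos.trans_le (one_le_norm_liftHyperplane y)

lemma liftHyperplane_ne_zero (y : Hyperplane n) : liftHyperplane y ≠ 0 :=
  norm_pos_iff.1 (norm_liftHyperplane_pos y)

lemma sphNormal_gnomonic (θ : ℝ) (y : Hyperplane n) :
    sphNormal n θ (gnomonic θ y) = ‖liftHyperplane y‖⁻¹ • liftHyperplane y :=
  add_sub_cancel_right _ _

lemma norm_sphNormal_gnomonic (θ : ℝ) (y : Hyperplane n) :
    ‖sphNormal n θ (gnomonic θ y)‖ = 1 := by
  rw [sphNormal_gnomonic]
  exact norm_smul_inv_norm (𝕜 := ℝ) (liftHyperplane_ne_zero y)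

lemma inner_sphNormal_gnomonic_eVec (θ : ℝ) (y : Hyperplane n) :
    ⟪sphNormal n θ (gnomonic θ y), eVec n⟫ = -‖liftHyperplane y‖⁻¹ := by
  rw [sphNormal_gnomonic, real_inner_smul_left, inner_liftHyperplane_eVec, mul_neg_one]

lemma liftHyperplane_eq_smul (θ : ℝ) (y : Hyperplane n) :
    liftHyperplane y = ‖liftHyperplane y‖ • sphNormal n θ (gnomonic θ y) := by
  rw [sphNormal_gnomonic, smul_inv_smul₀ (norm_liftHyperplane_pos y).ne']

lemma contDiff_liftHyperplane : ContDiff ℝ ∞ (liftHyperplane (n := n)) :=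
  (ℝ ∙ eVec n)ᗮ.subtypeL.contDiff.sub contDiff_const

lemma contDiff_norm_liftHyperplane : ContDiff ℝ ∞ fun y : Hyperplane n => ‖liftHyperplane y‖ :=
  contDiff_liftHyperplane.norm ℝ liftHyperplane_ne_zero

lemma contDiff_gnomonic (θ : ℝ) : ContDiff ℝ ∞ (gnomonic (n := n) θ) :=
  ((contDiff_norm_liftHyperplane.inv fun y => (norm_liftHyperplane_pos y).ne').smul
    contDiff_liftHyperplane).add contDiff_const

lemma contDiff_gnomonicPullback (θ : ℝ) {g : Euc n → ℝ} (hg : ContDiff ℝ ∞ g) :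
    ContDiff ℝ ∞ (gnomonicPullback θ g) :=
  contDiff_norm_liftHyperplane.mul (hg.comp (contDiff_gnomonic θ))

lemma hasDerivAt_liftHyperplane (y ζ : Hyperplane n) :
    HasDerivAt (fun t : ℝ => liftHyperplane (y + t • ζ)) (ζ : Euc n) 0 := by
  have hline := ((hasDerivAt_id (0 : ℝ)).smul_const (ζ : Euc n)).const_add (y : Euc n)
  exact (hline.sub_const (eVec n)).congr_deriv (one_smul ℝ _)

lemma hasDerivAt_norm_liftHyperplane (θ : ℝ) (y ζ : Hyperplane n) :
    HasDerivAt (fun t : ℝ => ‖liftHyperplane (y + t • ζ)‖)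
      ⟪sphNormal n θ (gnomonic θ y), (ζ : Euc n)⟫ 0 := by
  have := hasDerivAt_norm_curve (hasDerivAt_liftHyperplane y ζ) (liftHyperplane_ne_zero _)
  simpa only [zero_smul, add_zero, ← sphNormal_gnomonic θ] using this

lemma hasDerivAt_sphNormal_gnomonic (θ : ℝ) (y ζ : Hyperplane n) :
    HasDerivAt (fun t : ℝ => sphNormal n θ (gnomonic θ (y + t • ζ)))
      (‖liftHyperplane y‖⁻¹ • tproj n θ (gnomonic θ y) ζ) 0 := by
  have := hasDerivAt_inv_norm_smul (hasDerivAt_liftHyperplane y ζ) (liftHyperplane_ne_zero _)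
  simpa only [zero_smul, add_zero, ← sphNormal_gnomonic θ, ← tproj_apply] using this

lemma hasDerivAt_gnomonic (θ : ℝ) (y ζ : Hyperplane n) :
    HasDerivAt (fun t : ℝ => gnomonic θ (y + t • ζ))
      (‖liftHyperplane y‖⁻¹ • tproj n θ (gnomonic θ y) ζ) 0 := by
  simpa only [sphNormal, sub_add_cancel] using
    (hasDerivAt_sphNormal_gnomonic θ y ζ).add_const (cos θ • eVec n)

variable {θ : ℝ} {g : Euc n → ℝ}

lemma hasDerivAt_comp_gnomonic (hg : ContDiff ℝ ∞ g) (y ζ : Hyperplane n) :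
    HasDerivAt (fun t : ℝ => g (gnomonic θ (y + t • ζ)))
      (‖liftHyperplane y‖⁻¹ * ⟪gradient g (gnomonic θ y), tproj n θ (gnomonic θ y) ζ⟫) 0 := by
  have := hasDerivAt_comp_dirDeriv (hg.differentiable (by simp)) (hasDerivAt_gnomonic θ y ζ)
  simpa only [zero_smul, add_zero, dirDeriv_smul, inner_gradient_eq_dirDeriv] using this

lemma dirDeriv_gnomonicPullback (hg : ContDiff ℝ ∞ g) (ζ y : Hyperplane n) :
    dirDeriv ζ (gnomonicPullback θ g) y = ⟪supportPoint θ g (gnomonic θ y), (ζ : Euc n)⟫ := by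
  have hline := hasDerivAt_line ((contDiff_gnomonicPullback θ hg).differentiable (by simp)) y ζ 0
  have hprod := hline.unique
    ((hasDerivAt_norm_liftHyperplane θ y ζ).mul (hasDerivAt_comp_gnomonic hg y ζ))
  simp only [zero_smul, add_zero] at hprod
  rw [hprod, supportPoint, inner_add_left, real_inner_smul_left, sgrad, inner_tproj_left,
    mul_inv_cancel_left₀ (norm_liftHyperplane_pos y).ne']
  ring

lemma hasDerivAt_gradient_comp_gnomonic (hg : ContDiff ℝ ∞ g) (y ζ : Hyperplane n) :
    HasDerivAt (fun t : ℝ => gradient g (gnomonic θ (y + t • ζ)))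
      (‖liftHyperplane y‖⁻¹ • fderiv ℝ (gradient g) (gnomonic θ y)
        (tproj n θ (gnomonic θ y) ζ)) 0 := by
  have hgrad := ((contDiff_gradient hg).differentiable (by simp)
    (gnomonic θ (y + (0 : ℝ) • ζ))).hasFDerivAt.comp_hasDerivAt (0 : ℝ) (hasDerivAt_gnomonic θ y ζ)
  simp only [zero_smul, add_zero, map_smul] at hgrad
  exact hgrad

lemma dirDeriv_dirDeriv_gnomonicPullback (hg : ContDiff ℝ ∞ g) (η ζ y : Hyperplane n) :
    dirDeriv η (dirDeriv ζ (gnomonicPullback θ g)) y = ‖liftHyperplane y‖⁻¹ *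
      (shess n θ g (gnomonic θ y) (tproj n θ (gnomonic θ y) η) (tproj n θ (gnomonic θ y) ζ)
        + g (gnomonic θ y) * ⟪tproj n θ (gnomonic θ y) η, tproj n θ (gnomonic θ y) ζ⟫) := by
  have hline := hasDerivAt_line
    ((contDiff_dirDeriv (contDiff_gnomonicPullback θ hg) ζ).differentiable (by simp)) y η 0
  have hgrad := hasDerivAt_gradient_comp_gnomonic (θ := θ) hg y η
  have hν := hasDerivAt_sphNormal_gnomonic θ y η
  have hX := ((hgrad.add (((hasDerivAt_comp_gnomonic (θ := θ) hg y η).sub (hν.inner ℝ hgrad)).smul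
    hν)).inner ℝ (hasDerivAt_const (0 : ℝ) (ζ : Euc n))).congr_of_eventuallyEq
    (f₁ := fun t : ℝ => dirDeriv ζ (gnomonicPullback θ g) (y + t • η))
    (Eventually.of_forall fun t => by
      beta_reduce
      rw [dirDeriv_gnomonicPullback hg, supportPoint_eq_gradient_add]
      rfl)
  have hunit := norm_sphNormal_gnomonic θ y
  have hderiv := hline.unique hX
  simp only [zero_smul, add_zero, inner_zero_right, zero_add] at hderiv
  rw [hderiv, shess, inner_tproj_tproj hunit, tproj_apply θ (gnomonic θ y) (ζ : Euc n)]
  simp only [inner_add_left, real_inner_smul_left, inner_sub_right, real_inner_smul_right,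
    Pi.sub_apply, zero_smul, add_zero]
  rw [real_inner_comm (gradient g (gnomonic θ y)) (sphNormal n θ (gnomonic θ y)),
    real_inner_comm (fderiv ℝ (gradient g) (gnomonic θ y) _) (sphNormal n θ (gnomonic θ y)),
    real_inner_comm (tproj n θ (gnomonic θ y) η)]
  ring

end Gnomonic

section Chart

lemma sin_pos_of_acute {θ : ℝ} (hθ : θ ∈ Ioo 0 (π / 2)) : 0 < sin θ :=
  Real.sin_pos_of_pos_of_lt_pi hθ.1 (hθ.2.trans (half_lt_self Real.pi_pos))

lemma cos_pos_of_acute {θ : ℝ} (hθ : θ ∈ Ioo 0 (π / 2)) : 0 < cos θ :=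
  Real.cos_pos_of_mem_Ioo ⟨(neg_neg_of_pos Real.pi_div_two_pos).trans hθ.1, hθ.2⟩

variable {n : ℕ} {θ : ℝ} {g : Euc n → ℝ} {y : Hyperplane n}

lemma inner_liftHyperplane_supportPoint (θ : ℝ) (g : Euc n → ℝ) (y : Hyperplane n) :
    ⟪supportPoint θ g (gnomonic θ y), liftHyperplane y⟫ = gnomonicPullback θ g y := by
  have hlift := congrArg (fun z => ⟪supportPoint θ g (gnomonic θ y), z⟫)
    (liftHyperplane_eq_smul θ y)
  simp only [real_inner_smul_right,
    inner_supportPoint_sphNormal (norm_sphNormal_gnomonic θ y)] at hlift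
  exact hlift

lemma negLegendre_gnomonicPullback (hg : ContDiff ℝ ∞ g) (y : Hyperplane n) :
    negLegendre (gnomonicPullback θ g) y = -⟪supportPoint θ g (gnomonic θ y), eVec n⟫ := by
  rw [negLegendre, dirDeriv_gnomonicPullback hg, coe_eq_liftHyperplane_add y, inner_add_right,
    inner_liftHyperplane_supportPoint]
  ring

lemma coe_gradient_gnomonicPullback (hg : ContDiff ℝ ∞ g) (y : Hyperplane n) :
    ((gradient (gnomonicPullback θ g) y : Hyperplane n) : Euc n) = supportPoint θ g (gnomonic θ y)
      - ⟪supportPoint θ g (gnomonic θ y), eVec n⟫ • eVec n := by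
  set X := supportPoint θ g (gnomonic θ y)
  have hmem : X - ⟪X, eVec n⟫ • eVec n ∈ (ℝ ∙ eVec n)ᗮ := by
    rw [Submodule.mem_orthogonal_singleton_iff_inner_left, inner_sub_left, real_inner_smul_left,
      real_inner_self_eq_norm_sq, norm_eVec]
    ring
  have hgrad : gradient (gnomonicPullback θ g) y = ⟨X - ⟪X, eVec n⟫ • eVec n, hmem⟩ := by
    refine ext_inner_right ℝ fun w => ?_
    rw [inner_gradient_eq_dirDeriv, dirDeriv_gnomonicPullback hg, Submodule.coe_inner,
      inner_sub_left, real_inner_smul_left, real_inner_comm (w : Euc n) (eVec n),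
      inner_hyperplane_eVec, mul_zero, sub_zero]
  rw [hgrad]

lemma homogGradSq_gnomonicPullback (hg : ContDiff ℝ ∞ g) (y : Hyperplane n) :
    homogGradSq (gnomonicPullback θ g) y
      = g (gnomonic θ y) ^ 2 + ‖sgrad n θ g (gnomonic θ y)‖ ^ 2 := by
  rw [← norm_supportPoint_sq (norm_sphNormal_gnomonic θ y), homogGradSq,
    negLegendre_gnomonicPullback hg, Submodule.coe_norm, coe_gradient_gnomonicPullback hg,
    norm_sub_sq_real, real_inner_smul_right, norm_smul, norm_eVec, Real.norm_eq_abs, mul_one,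
    sq_abs]
  ring

lemma gnomonic_last (θ : ℝ) (y : Hyperplane n) :
    gnomonic θ y (Fin.last n) = ‖liftHyperplane y‖⁻¹ - cos θ := by
  have hνe := inner_sphNormal_gnomonic_eVec θ y
  rw [inner_sphNormal_eVec] at hνe
  linarith

lemma norm_liftHyperplane_le_inv_cos_iff (hθ : θ ∈ Ioo 0 (π / 2)) :
    ‖liftHyperplane y‖ ≤ (cos θ)⁻¹ ↔ ‖y‖ ≤ tan θ := by
  have hc := cos_pos_of_acute hθ
  rw [← sq_le_sq₀ (norm_nonneg _) (inv_nonneg.2 hc.le), norm_liftHyperplane_sq, inv_pow,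
    ← Real.inv_one_add_tan_sq hc.ne', inv_inv, add_le_add_iff_left,
    sq_le_sq₀ (norm_nonneg _) (Real.tan_pos_of_pos_of_lt_pi_div_two hθ.1 hθ.2).le]

lemma norm_liftHyperplane_of_norm_eq_tan (hc : 0 < cos θ) (hy : ‖y‖ = tan θ) :
    ‖liftHyperplane y‖ = (cos θ)⁻¹ := by
  rw [← sq_eq_sq₀ (norm_nonneg _) (inv_nonneg.2 hc.le), norm_liftHyperplane_sq, inv_pow,
    ← Real.inv_one_add_tan_sq hc.ne', inv_inv, hy]

lemma gnomonic_mem_cap_iff (hθ : θ ∈ Ioo 0 (π / 2)) : gnomonic θ y ∈ cap n θ ↔ ‖y‖ ≤ tan θ := by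
  have hc := cos_pos_of_acute hθ
  rw [← norm_liftHyperplane_le_inv_cos_iff hθ, le_inv_comm₀ (norm_liftHyperplane_pos y) hc,
    ← sub_nonneg, ← gnomonic_last]
  exact and_iff_left (norm_sphNormal_gnomonic θ y)

lemma gnomonic_mem_capBdry (hc : 0 < cos θ) (hy : ‖y‖ = tan θ) : gnomonic θ y ∈ capBdry n θ := by
  refine ⟨?_, norm_sphNormal_gnomonic θ y⟩
  rw [gnomonic_last, norm_liftHyperplane_of_norm_eq_tan hc hy, inv_inv, sub_self]

lemma exists_gnomonic_eq (hθ : θ ∈ Ioo 0 (π / 2)) {ξ : Euc n} (hξ : ξ ∈ cap n θ) :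
    ∃ y : Hyperplane n, ‖y‖ ≤ tan θ ∧ gnomonic θ y = ξ := by
  have hc := cos_pos_of_acute hθ
  set a := ξ (Fin.last n) + cos θ with ha
  have ha0 : 0 < a := add_pos_of_nonneg_of_pos hξ.1 hc
  have hmem : a⁻¹ • sphNormal n θ ξ + eVec n ∈ (ℝ ∙ eVec n)ᗮ := by
    rw [Submodule.mem_orthogonal_singleton_iff_inner_left, inner_add_left, real_inner_smul_left,
      inner_sphNormal_eVec, real_inner_self_eq_norm_sq, norm_eVec, ← ha]
    field_simp
    ring
  have hlift : liftHyperplane ⟨_, hmem⟩ = a⁻¹ • sphNormal n θ ξ := add_sub_cancel_right _ _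
  have hgno : gnomonic θ ⟨_, hmem⟩ = ξ := by
    rw [gnomonic, hlift, norm_smul, hξ.2, mul_one, Real.norm_of_nonneg (inv_nonneg.2 ha0.le),
      inv_inv, smul_inv_smul₀ ha0.ne', sphNormal, sub_add_cancel]
  exact ⟨_, (gnomonic_mem_cap_iff hθ).1 (by rwa [hgno]), hgno⟩

lemma exists_tproj_gnomonic_eq {X : Euc n} (hX : IsTangent n θ (gnomonic θ y) X) :
    ∃ ζ : Hyperplane n, tproj n θ (gnomonic θ y) ζ = X ∧
      ‖ζ‖ ≤ (1 + ‖liftHyperplane y‖) * ‖X‖ := by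
  have hν := norm_sphNormal_gnomonic θ y
  set a := ‖liftHyperplane y‖ * ⟪X, eVec n⟫ with ha
  have hmem : X + a • sphNormal n θ (gnomonic θ y) ∈ (ℝ ∙ eVec n)ᗮ := by
    rw [Submodule.mem_orthogonal_singleton_iff_inner_left, inner_add_left, real_inner_smul_left,
      inner_sphNormal_gnomonic_eVec, ha]
    field_simp [(norm_liftHyperplane_pos y).ne']
    ring
  refine ⟨⟨_, hmem⟩, ?_, ?_⟩
  · rw [map_add, map_smul, tproj_sphNormal hν, tproj_of_isTangent hX, smul_zero, add_zero]
  · have hXe := abs_real_inner_le_norm X (eVec n)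
    rw [norm_eVec, mul_one] at hXe
    calc ‖X + a • sphNormal n θ (gnomonic θ y)‖
        ≤ ‖X‖ + ‖liftHyperplane y‖ * |⟪X, eVec n⟫| := by
          refine (norm_add_le _ _).trans_eq ?_
          rw [norm_smul, hν, mul_one, ha, norm_mul, norm_norm, Real.norm_eq_abs]
      _ ≤ ‖X‖ + ‖liftHyperplane y‖ * ‖X‖ := by gcongr
      _ = (1 + ‖liftHyperplane y‖) * ‖X‖ := by ring

lemma tproj_gnomonic_ne_zero {ζ : Hyperplane n} (hζ : ζ ≠ 0) :
    tproj n θ (gnomonic θ y) ζ ≠ 0 := by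
  intro hzero
  rw [tproj_apply, sub_eq_zero] at hzero
  have hinner : ⟪sphNormal n θ (gnomonic θ y), (ζ : Euc n)⟫ = 0 := by
    have hζe := inner_hyperplane_eVec ζ
    rw [hzero, real_inner_smul_left, inner_sphNormal_gnomonic_eVec] at hζe
    exact (mul_eq_zero.1 hζe).resolve_right
      (neg_ne_zero.2 (inv_ne_zero (norm_liftHyperplane_pos y).ne'))
  rw [hinner, zero_smul] at hzero
  exact hζ (Subtype.ext hzero)

lemma tproj_gnomonic_of_norm_eq_tan (hθ : θ ∈ Ioo 0 (π / 2)) (hy : ‖y‖ = tan θ) :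
    tproj n θ (gnomonic θ y) y = sin θ • conormal n θ (gnomonic θ y) := by
  have hs : sin θ ≠ 0 := (sin_pos_of_acute hθ).ne'
  have hc := cos_pos_of_acute hθ
  have hν := norm_sphNormal_gnomonic θ y
  rw [coe_eq_liftHyperplane_add, liftHyperplane_eq_smul θ, map_add, map_smul, tproj_sphNormal hν,
    tproj_apply, real_inner_comm, real_inner_comm,
    inner_sphNormal_eVec_of_mem_capBdry (gnomonic_mem_capBdry hc hy), conormal_eq_cot_smul_add hs,
    smul_add, smul_smul, smul_smul, mul_inv_cancel₀ hs, Real.cot_eq_cos_div_sin,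
    mul_div_cancel₀ _ hs]
  module

end Chart

section Pullback

variable {n : ℕ} {θ : ℝ} {g : Euc n → ℝ} {y : Hyperplane n}

lemma gnomonicPullback_mem_Icc (hθ : θ ∈ Ioo 0 (π / 2)) {m K : ℝ} (hm : 0 ≤ m)
    (hlower : ∀ ξ ∈ cap n θ, m ≤ g ξ) (hupper : ∀ ξ ∈ cap n θ, g ξ ≤ K) (hy : ‖y‖ ≤ tan θ) :
    gnomonicPullback θ g y ∈ Icc m ((cos θ)⁻¹ * K) := by
  have hcap := (gnomonic_mem_cap_iff hθ).2 hy
  have hg := hm.trans (hlower _ hcap)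
  refine ⟨(hlower _ hcap).trans (le_mul_of_one_le_left hg (one_le_norm_liftHyperplane y)), ?_⟩
  have hnorm := (norm_liftHyperplane_le_inv_cos_iff hθ).2 hy
  exact mul_le_mul hnorm (hupper _ hcap) hg ((norm_nonneg _).trans hnorm)

lemma hess_gnomonicPullback_pos (hg : ContDiff ℝ ∞ g) (hθ : θ ∈ Ioo 0 (π / 2))
    (hconv : IsConvexSol n θ g) (hy : ‖y‖ ≤ tan θ) {ζ : Hyperplane n} (hζ : ζ ≠ 0) :
    0 < dirDeriv ζ (dirDeriv ζ (gnomonicPullback θ g)) y := by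
  rw [dirDeriv_dirDeriv_gnomonicPullback hg]
  exact mul_pos (inv_pos.2 (norm_liftHyperplane_pos y)) <| hconv _ ((gnomonic_mem_cap_iff hθ).2 hy)
    _ (isTangent_tproj (norm_sphNormal_gnomonic θ y) _) (tproj_gnomonic_ne_zero hζ)

lemma dirDeriv_gnomonicPullback_of_robinBC (hg : ContDiff ℝ ∞ g) (hθ : θ ∈ Ioo 0 (π / 2))
    (hbc : RobinBC n θ g) (hy : ‖y‖ = tan θ) :
    dirDeriv y (gnomonicPullback θ g) y = gnomonicPullback θ g y := by
  have hs : sin θ ≠ 0 := (sin_pos_of_acute hθ).ne'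
  have hc := cos_pos_of_acute hθ
  have hlegendre := negLegendre_gnomonicPullback (θ := θ) hg y
  rw [inner_supportPoint_eVec_of_robinBC hs hbc (gnomonic_mem_capBdry hc hy), neg_zero,
    negLegendre, sub_eq_zero] at hlegendre
  exact hlegendre.symm

lemma hess_gnomonicPullback_position (hg : ContDiff ℝ ∞ g) (hθ : θ ∈ Ioo 0 (π / 2))
    (hy : ‖y‖ = tan θ) :
    dirDeriv y (dirDeriv y (gnomonicPullback θ g)) y = cos θ * sin θ ^ 2 *
      (shess n θ g (gnomonic θ y) (conormal n θ (gnomonic θ y)) (conormal n θ (gnomonic θ y))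
        + g (gnomonic θ y)) := by
  have hs : sin θ ≠ 0 := (sin_pos_of_acute hθ).ne'
  have hc := cos_pos_of_acute hθ
  rw [dirDeriv_dirDeriv_gnomonicPullback hg, tproj_gnomonic_of_norm_eq_tan hθ hy,
    norm_liftHyperplane_of_norm_eq_tan hc hy, shess_smul_smul, real_inner_smul_left,
    real_inner_smul_right, inner_conormal_self hs (gnomonic_mem_capBdry hc hy), inv_inv]
  ring

end Pullback

section Determinant

lemma det_inner_map_eq {ι E : Type*} [Fintype ι] [DecidableEq ι] [NormedAddCommGroup E]
    [InnerProductSpace ℝ E] (W : OrthonormalBasis ι ℝ E) (w : ι → E) (N : E →ₗ[ℝ] E) :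
    (Matrix.of fun i j => ⟪w i, N (w j)⟫).det = W.toBasis.det w ^ 2 * LinearMap.det N := by
  have hfactor : (Matrix.of fun i j => ⟪w i, N (w j)⟫) = (W.toBasis.toMatrix w)ᵀ *
      (LinearMap.toMatrix W.toBasis W.toBasis N * W.toBasis.toMatrix w) := by
    have hcol (k j : ι) : (LinearMap.toMatrix W.toBasis W.toBasis N * W.toBasis.toMatrix w) k j
        = ⟪W k, N (w j)⟫ := by
      rw [← W.repr_apply_apply, ← W.coe_toBasis_repr_apply,
        ← LinearMap.toMatrix_mulVec_repr W.toBasis W.toBasis]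
      rfl
    ext i j
    simp only [Matrix.of_apply, Matrix.mul_apply, Matrix.transpose_apply, hcol,
      Basis.toMatrix_apply, W.coe_toBasis_repr_apply, W.repr_apply_apply]
    rw [← W.sum_inner_mul_inner]
    exact Finset.sum_congr rfl fun k _ => by rw [real_inner_comm]
  rw [hfactor, Matrix.det_mul, Matrix.det_mul, Matrix.det_transpose, LinearMap.det_toMatrix,
    Basis.det_apply]
  ring

variable {n : ℕ} {θ : ℝ} {g : Euc n → ℝ}

lemma exists_orthonormalBasis_sum_eVec (v : OrthonormalBasis (Fin n) ℝ (Hyperplane n)) :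
    ∃ W : OrthonormalBasis (Fin n ⊕ Unit) ℝ (Euc n),
      ⇑W = Sum.elim (fun a => (v a : Euc n)) fun _ => eVec n := by
  have horth : Orthonormal ℝ (Sum.elim (fun a => (v a : Euc n)) fun _ : Unit => eVec n) := by
    rw [orthonormal_iff_ite]
    rintro (a | a) (b | b)
    · simpa using orthonormal_iff_ite.1 v.orthonormal a b
    · simpa using inner_hyperplane_eVec (v a)
    · simpa [real_inner_comm] using inner_hyperplane_eVec (v b)
    · simp [norm_eVec]
  have hrestrict : Orthonormal ℝ (univ.domRestrict
      (Sum.elim (fun a => (v a : Euc n)) fun _ : Unit => eVec n)) :=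
    horth.comp _ Subtype.val_injective
  obtain ⟨W, hW⟩ := hrestrict.exists_orthonormalBasis_extension_of_card_eq (by simp)
  exact ⟨W, funext fun i => hW i (mem_univ i)⟩

/-- The frame of the hyperplane completed by the normal of the cap. -/
def normalFrame (θ : ℝ) (v : Fin n → Hyperplane n) (y : Hyperplane n) : Fin n ⊕ Unit → Euc n :=
  Sum.elim (fun a => (v a : Euc n)) fun _ => sphNormal n θ (gnomonic θ y)

lemma det_normalFrame (v : OrthonormalBasis (Fin n) ℝ (Hyperplane n)) (y : Hyperplane n)
    {W : OrthonormalBasis (Fin n ⊕ Unit) ℝ (Euc n)}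
    (hW : ⇑W = Sum.elim (fun a => (v a : Euc n)) fun _ => eVec n) :
    W.toBasis.det (normalFrame θ v y) = -‖liftHyperplane y‖⁻¹ := by
  have hblocks : W.toBasis.toMatrix (normalFrame θ v y) = Matrix.fromBlocks 1
      (Matrix.replicateCol Unit fun a => ⟪(v a : Euc n), sphNormal n θ (gnomonic θ y)⟫) 0
      (Matrix.of fun _ _ => -‖liftHyperplane y‖⁻¹) := by
    ext i j
    rw [Basis.toMatrix_apply, W.coe_toBasis_repr_apply, W.repr_apply_apply, hW, normalFrame]
    rcases i with a | a <;> rcases j with b | b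
    · simpa [Matrix.one_apply] using orthonormal_iff_ite.1 v.orthonormal a b
    · rfl
    · simpa [real_inner_comm] using inner_hyperplane_eVec (v b)
    · simpa [real_inner_comm] using inner_sphNormal_gnomonic_eVec θ y
  rw [Basis.det_apply, hblocks, Matrix.det_fromBlocks_zero₂₁, Matrix.det_one, one_mul,
    Matrix.det_unique, Matrix.of_apply]

lemma inner_hessOp_normalFrame (hg : ContDiff ℝ ∞ g) (v : Fin n → Hyperplane n)
    (y : Hyperplane n) :
    (Matrix.of fun i j => ⟪normalFrame θ v y i,
        (hessOp n θ g (gnomonic θ y)).toLinearMap (normalFrame θ v y j)⟫) =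
      let p := fun a => ⟪sphNormal n θ (gnomonic θ y), (v a : Euc n)⟫
      Matrix.fromBlocks (‖liftHyperplane y‖ • hessMatrix (gnomonicPullback θ g) v y
          + Matrix.replicateCol Unit p * Matrix.replicateRow Unit p)
        (Matrix.replicateCol Unit p) (Matrix.replicateRow Unit p) 1 := by
  have hν := norm_sphNormal_gnomonic θ y
  ext i j
  rw [Matrix.of_apply, ContinuousLinearMap.coe_coe, inner_hessOp hν]
  rcases i with a | a <;> rcases j with b | b
  · rw [Matrix.fromBlocks_apply₁₁]
    simp only [normalFrame, Sum.elim_inl, Matrix.add_apply, Matrix.smul_apply, hessMatrix,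
      Matrix.of_apply, Matrix.mul_apply, Finset.univ_unique, Finset.sum_singleton,
      Matrix.replicateCol_apply, Matrix.replicateRow_apply]
    rw [dirDeriv_comm (contDiff_gnomonicPullback θ hg), dirDeriv_dirDeriv_gnomonicPullback hg,
      smul_eq_mul, mul_inv_cancel_left₀ (norm_liftHyperplane_pos y).ne']
  all_goals
    simp [normalFrame, tproj_sphNormal hν, shess, hν]

lemma sdet_gnomonic (hg : ContDiff ℝ ∞ g) (v : OrthonormalBasis (Fin n) ℝ (Hyperplane n))
    (y : Hyperplane n) :
    sdet n θ g (gnomonic θ y)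
      = ‖liftHyperplane y‖ ^ (n + 2) * (hessMatrix (gnomonicPullback θ g) v y).det := by
  obtain ⟨W, hW⟩ := exists_orthonormalBasis_sum_eVec v
  have hdet := det_inner_map_eq W (normalFrame θ v y)
    (hessOp n θ g (gnomonic θ y)).toLinearMap
  rw [inner_hessOp_normalFrame hg, Matrix.det_fromBlocks_one₂₂, add_sub_cancel_right,
    Matrix.det_smul, Fintype.card_fin, det_normalFrame v y hW, neg_sq, inv_pow,
    eq_inv_mul_iff_mul_eq₀ (pow_ne_zero 2 (norm_liftHyperplane_pos y).ne')] at hdet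
  rw [sdet, ← hdet]
  ring

end Determinant

section LogDetEquation

variable {n : ℕ} {θ p q : ℝ} {f h : Euc n → ℝ} {y : Hyperplane n}

/-- The inhomogeneity of the flat log-determinant equation satisfied by `gnomonicPullback θ h`;
the second term collects the powers of `‖liftHyperplane y‖` produced by the chart. -/
def flatInhomogeneity (θ p : ℝ) (f : Euc n → ℝ) (y : Hyperplane n) : ℝ :=
  Real.log (gnomonicPullback θ f y) - (n + 2 + p) / 2 * Real.log (1 + ‖y‖ ^ 2)

lemma log_det_hessMatrix_gnomonicPullback (hh : ContDiff ℝ ∞ h)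
    (hcap : gnomonic θ y ∈ cap n θ) (hf0 : 0 < f (gnomonic θ y)) (hh0 : 0 < h (gnomonic θ y))
    (heq : SolvesEq n θ p q f h) (v : OrthonormalBasis (Fin n) ℝ (Hyperplane n)) :
    Real.log (hessMatrix (gnomonicPullback θ h) v y).det = flatInhomogeneity θ p f y
      + ((p - 1) * Real.log (gnomonicPullback θ h y)
        + ((n : ℝ) + 1 - q) / 2 * Real.log (homogGradSq (gnomonicPullback θ h) y)) := by
  have hr := norm_liftHyperplane_pos y
  have hV : 0 < homogGradSq (gnomonicPullback θ h) y := by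
    rw [homogGradSq_gnomonicPullback hh]
    positivity
  have hdet := heq _ hcap
  rw [sdet_gnomonic hh v, eqRHS, ← homogGradSq_gnomonicPullback hh,
    ← eq_inv_mul_iff_mul_eq₀ (pow_pos hr _).ne'] at hdet
  rw [hdet, Real.log_mul (by positivity) (by positivity), Real.log_inv, Real.log_pow,
    Real.log_mul (by positivity) (by positivity), Real.log_mul hf0.ne' (by positivity),
    Real.log_rpow hh0, Real.log_rpow hV, flatInhomogeneity, gnomonicPullback, gnomonicPullback,
    Real.log_mul hr.ne' hf0.ne', Real.log_mul hr.ne' hh0.ne', ← norm_liftHyperplane_sq,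
    Real.log_pow]
  push_cast
  ring

lemma solvesLogDetEqNear_gnomonicPullback (hθ : θ ∈ Ioo 0 (π / 2)) (hh : ContDiff ℝ ∞ h)
    (hf0 : ∀ ξ ∈ cap n θ, 0 < f ξ) (hh0 : ∀ ξ ∈ cap n θ, 0 < h ξ) (heq : SolvesEq n θ p q f h)
    (v : OrthonormalBasis (Fin n) ℝ (Hyperplane n)) (hy : ‖y‖ < tan θ) :
    SolvesLogDetEqNear (flatInhomogeneity θ p f) (p - 1) (((n : ℝ) + 1 - q) / 2)
      (gnomonicPullback θ h) v y := by
  filter_upwards [continuous_norm.continuousAt.eventually_lt_const hy] with x hx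
  have hcap := (gnomonic_mem_cap_iff hθ).2 hx.le
  exact log_det_hessMatrix_gnomonicPullback hh hcap (hf0 _ hcap) (hh0 _ hcap) heq v

end LogDetEquation

section JetBounds

namespace HasTwoJetBound

variable {E : Type*} [NormedAddCommGroup E] [NormedSpace ℝ E] {f g : E → ℝ} {B B' m : ℝ} {y : E}

lemma sub (hf : HasTwoJetBound f B y) (hg : HasTwoJetBound g B' y) :
    HasTwoJetBound (fun x => f x - g x) (B + B') y := by
  intro ζ
  obtain ⟨b, c, hjet, hb, hc⟩ := hf ζ
  obtain ⟨b', c', hjet', hb', hc'⟩ := hg ζ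
  refine ⟨_, _, hjet.sub hjet', ?_, ?_⟩
  · exact (abs_sub _ _).trans ((add_le_add hb hb').trans_eq (add_mul ..).symm)
  · exact (abs_sub _ _).trans ((add_le_add hc hc').trans_eq (add_mul ..).symm)

lemma const_mul (a : ℝ) (hf : HasTwoJetBound f B y) :
    HasTwoJetBound (fun x => a * f x) (|a| * B) y := by
  intro ζ
  obtain ⟨b, c, hjet, hb, hc⟩ := hf ζ
  refine ⟨_, _, hjet.const_mul a, ?_, ?_⟩ <;> rw [abs_mul, mul_assoc] <;> gcongr

lemma log (hm : 0 < m) (hlower : m ≤ f y) (hf : HasTwoJetBound f B y) :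
    HasTwoJetBound (fun x => Real.log (f x)) (B / m + (B / m) ^ 2) y := by
  intro ζ
  obtain ⟨b, c, hjet, hb, hc⟩ := hf ζ
  have hfy : 0 < f y := hm.trans_le hlower
  have hdiv {x X : ℝ} (hx : |x| ≤ X) : |x / f y| ≤ X / m := by
    rw [abs_div, abs_of_pos hfy]
    exact div_le_div₀ ((abs_nonneg x).trans hx) hx hm hlower
  refine ⟨_, _, hjet.log hfy.ne', ?_, ?_⟩
  · calc |b / f y| ≤ B * ‖ζ‖ / m := hdiv hb
      _ = B / m * ‖ζ‖ := by ring
      _ ≤ (B / m + (B / m) ^ 2) * ‖ζ‖ := by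
        gcongr
        exact le_add_of_nonneg_right (sq_nonneg _)
  · calc |c / f y - b ^ 2 / f y ^ 2| ≤ |c / f y| + |b / f y| ^ 2 := by
          rw [← div_pow]
          exact (abs_sub _ _).trans_eq (by rw [abs_pow])
      _ ≤ B * ‖ζ‖ ^ 2 / m + (B * ‖ζ‖ / m) ^ 2 :=
          add_le_add (hdiv hc) (pow_le_pow_left₀ (abs_nonneg _) (hdiv hb) 2)
      _ = (B / m + (B / m) ^ 2) * ‖ζ‖ ^ 2 := by ring

end HasTwoJetBound

section InnerProduct

variable {E : Type*} [NormedAddCommGroup E] [InnerProductSpace ℝ E]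

lemma hasTwoJetAt_one_add_norm_sq (ζ y : E) :
    HasTwoJetAt (fun x : E => 1 + ‖x‖ ^ 2) ζ (2 * ⟪y, ζ⟫) (2 * ‖ζ‖ ^ 2) y := by
  have hline (t : ℝ) : HasDerivAt (fun t : ℝ => y + t • ζ) ζ t := by
    simpa using ((hasDerivAt_id t).smul_const ζ).const_add y
  refine ⟨fun t => 2 * ⟪y + t • ζ, ζ⟫, Eventually.of_forall fun t => ?_, by simp, ?_⟩
  · exact (hline t).norm_sq.const_add 1
  · simpa [real_inner_self_eq_norm_sq] using
      ((hline 0).inner ℝ (hasDerivAt_const 0 ζ)).const_mul 2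

lemma hasTwoJetBound_log_one_add_norm_sq (y : E) :
    HasTwoJetBound (fun x : E => Real.log (1 + ‖x‖ ^ 2)) 3 y := by
  intro ζ
  have hpos : 0 < 1 + ‖y‖ ^ 2 := by positivity
  have hb : |2 * ⟪y, ζ⟫ / (1 + ‖y‖ ^ 2)| ≤ ‖ζ‖ := by
    rw [abs_div, abs_of_pos hpos, div_le_iff₀ hpos, abs_mul, abs_two]
    nlinarith [abs_real_inner_le_norm y ζ, mul_nonneg (norm_nonneg ζ) (sq_nonneg (‖y‖ - 1))]
  have hc : |2 * ‖ζ‖ ^ 2 / (1 + ‖y‖ ^ 2)| ≤ 2 * ‖ζ‖ ^ 2 := by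
    rw [abs_of_nonneg (by positivity)]
    exact div_le_self (by positivity) (le_add_of_nonneg_right (by positivity))
  refine ⟨_, _, (hasTwoJetAt_one_add_norm_sq ζ y).log hpos.ne', ?_, ?_⟩
  · linarith [norm_nonneg ζ]
  · rw [← div_pow]
    refine (abs_sub _ _).trans ?_
    rw [abs_pow]
    linarith [pow_le_pow_left₀ (abs_nonneg _) hb 2]

end InnerProduct

end JetBounds

section InhomogeneityBound

variable {n : ℕ} {θ : ℝ} {g : Euc n → ℝ} {y : Hyperplane n} {K : ℝ}

lemma CTwoNormLe.mono {K' : ℝ} (h : CTwoNormLe n θ g K) (hK : K ≤ K') : CTwoNormLe n θ g K' := by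
  obtain ⟨⟨h₀, h₁⟩, h₂⟩ := h
  refine ⟨⟨fun ξ hξ => (h₀ ξ hξ).trans hK, fun ξ hξ => (h₁ ξ hξ).trans hK⟩,
    fun ξ hξ X Y hX hY => (h₂ ξ hξ X Y hX hY).trans (by gcongr)⟩

lemma hasTwoJetBound_gnomonicPullback (hg : ContDiff ℝ ∞ g) (hgK : CTwoNormLe n θ g K)
    (hcap : gnomonic θ y ∈ cap n θ) : HasTwoJetBound (gnomonicPullback θ g) (2 * K) y := by
  intro ζ
  obtain ⟨⟨hC0, hC1⟩, hC2⟩ := hgK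
  have hν := norm_sphNormal_gnomonic θ y
  have hK : 0 ≤ K := (abs_nonneg _).trans (hC0 _ hcap)
  refine ⟨_, _, hasTwoJetAt_of_contDiff (contDiff_gnomonicPullback θ hg) ζ y, ?_, ?_⟩
  · rw [dirDeriv_gnomonicPullback hg, two_mul]
    exact (abs_real_inner_le_norm _ _).trans <| mul_le_mul_of_nonneg_right
      ((norm_supportPoint_le hν g).trans (add_le_add (hC1 _ hcap) (hC0 _ hcap))) (norm_nonneg _)
  · set T := tproj n θ (gnomonic θ y) (ζ : Euc n) with hT
    have hTtan : IsTangent n θ (gnomonic θ y) T := isTangent_tproj hν _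
    rw [dirDeriv_dirDeriv_gnomonicPullback hg, abs_mul, abs_of_pos
      (inv_pos.2 (norm_liftHyperplane_pos y)), ← hT, real_inner_self_eq_norm_sq]
    calc ‖liftHyperplane y‖⁻¹ * |shess n θ g (gnomonic θ y) T T + g (gnomonic θ y) * ‖T‖ ^ 2|
        ≤ |shess n θ g (gnomonic θ y) T T + g (gnomonic θ y) * ‖T‖ ^ 2| :=
          mul_le_of_le_one_left (abs_nonneg _)
            (inv_le_one_of_one_le₀ (one_le_norm_liftHyperplane y))
      _ ≤ K * ‖T‖ * ‖T‖ + K * ‖T‖ ^ 2 := by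
          refine (abs_add_le _ _).trans (add_le_add (hC2 _ hcap T T hTtan hTtan) ?_)
          rw [abs_mul, abs_of_nonneg (sq_nonneg ‖T‖)]
          exact mul_le_mul_of_nonneg_right (hC0 _ hcap) (sq_nonneg _)
      _ = 2 * K * ‖T‖ ^ 2 := by ring
      _ ≤ 2 * K * ‖ζ‖ ^ 2 := by
          gcongr
          exact norm_tproj_le hν _

lemma hasTwoJetBound_flatInhomogeneity {m : ℝ} (hm : 0 < m) (p : ℝ) (hg : ContDiff ℝ ∞ g)
    (hlower : ∀ ξ ∈ cap n θ, m ≤ g ξ) (hgK : CTwoNormLe n θ g K)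
    (hcap : gnomonic θ y ∈ cap n θ) :
    HasTwoJetBound (flatInhomogeneity θ p g)
      (2 * K / m + (2 * K / m) ^ 2 + |((n : ℝ) + 2 + p) / 2| * 3) y := by
  have hpull : m ≤ gnomonicPullback θ g y :=
    (hlower _ hcap).trans (le_mul_of_one_le_left (hm.le.trans (hlower _ hcap))
      (one_le_norm_liftHyperplane y))
  exact ((hasTwoJetBound_gnomonicPullback hg hgK hcap).log hm hpull).sub
    ((hasTwoJetBound_log_one_add_norm_sq y).const_mul _)

end InhomogeneityBound

section Transfer

lemma abs_dirDeriv_dirDeriv_le {E : Type*} [NormedAddCommGroup E] [NormedSpace ℝ E] {u : E → ℝ}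
    (hu : ContDiff ℝ ∞ u) {y : E} {D : ℝ} (hnonneg : ∀ ζ, 0 ≤ dirDeriv ζ (dirDeriv ζ u) y)
    (hle : ∀ ζ, dirDeriv ζ (dirDeriv ζ u) y ≤ D * ‖ζ‖ ^ 2) (a b : E) :
    |dirDeriv a (dirDeriv b u) y| ≤ D * ‖a‖ * ‖b‖ := by
  have hcauchy : dirDeriv a (dirDeriv b u) y * dirDeriv b (dirDeriv a u) y
      ≤ dirDeriv a (dirDeriv a u) y * dirDeriv b (dirDeriv b u) y := by
    simp only [dirDeriv_dirDeriv hu] at hnonneg ⊢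
    exact LinearMap.BilinForm.apply_mul_apply_le_of_forall_zero_le
      (fderiv ℝ (fderiv ℝ u) y).toBilinForm hnonneg a b
  rw [dirDeriv_comm hu b a, ← sq] at hcauchy
  have hD (ζ : E) : 0 ≤ D * ‖ζ‖ ^ 2 := (hnonneg ζ).trans (hle ζ)
  have hDab : 0 ≤ D * ‖a‖ * ‖b‖ := by
    rcases eq_or_ne a 0 with rfl | ha
    · simp
    · have := nonneg_of_mul_nonneg_left (hD a) (pow_pos (norm_pos_iff.2 ha) 2)
      positivity
  refine abs_le_of_sq_le_sq ?_ hDab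
  calc dirDeriv a (dirDeriv b u) y ^ 2
      ≤ dirDeriv a (dirDeriv a u) y * dirDeriv b (dirDeriv b u) y := hcauchy
    _ ≤ (D * ‖a‖ ^ 2) * (D * ‖b‖ ^ 2) := mul_le_mul (hle a) (hle b) (hnonneg b) (hD a)
    _ = (D * ‖a‖ * ‖b‖) ^ 2 := by ring

variable {n : ℕ} {θ p q m₁ m₂ K₁ K₂ : ℝ} {f h : Euc n → ℝ} {y : Hyperplane n}

lemma abs_shess_le_of_hess_gnomonicPullback_le (hθ : θ ∈ Ioo 0 (π / 2)) (hh : ContDiff ℝ ∞ h)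
    (hhK : |h (gnomonic θ y)| ≤ K₂) {D : ℝ} (hD : 0 ≤ D) (hy : ‖y‖ ≤ tan θ)
    (hpos : ∀ ζ, 0 ≤ dirDeriv ζ (dirDeriv ζ (gnomonicPullback θ h)) y)
    (hle : ∀ ζ, dirDeriv ζ (dirDeriv ζ (gnomonicPullback θ h)) y ≤ D * ‖ζ‖ ^ 2) {X Y : Euc n}
    (hX : IsTangent n θ (gnomonic θ y) X) (hY : IsTangent n θ (gnomonic θ y) Y) :
    |shess n θ h (gnomonic θ y) X Y|
      ≤ ((cos θ)⁻¹ * (1 + (cos θ)⁻¹) ^ 2 * D + K₂) * ‖X‖ * ‖Y‖ := by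
  obtain ⟨η, rfl, hη⟩ := exists_tproj_gnomonic_eq hX
  obtain ⟨ζ, rfl, hζ⟩ := exists_tproj_gnomonic_eq hY
  set X := tproj n θ (gnomonic θ y) (η : Euc n)
  set Y := tproj n θ (gnomonic θ y) (ζ : Euc n)
  set r := ‖liftHyperplane y‖
  have hr : r ≤ (cos θ)⁻¹ := (norm_liftHyperplane_le_inv_cos_iff hθ).2 hy
  have hr0 : 0 < r := norm_liftHyperplane_pos y
  have hinv : 0 ≤ (cos θ)⁻¹ := hr0.le.trans hr
  have hshess : shess n θ h (gnomonic θ y) X Y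
      = r * dirDeriv η (dirDeriv ζ (gnomonicPullback θ h)) y - h (gnomonic θ y) * ⟪X, Y⟫ := by
    rw [dirDeriv_dirDeriv_gnomonicPullback hh, mul_inv_cancel_left₀ hr0.ne', add_sub_cancel_right]
  have hcross : |dirDeriv η (dirDeriv ζ (gnomonicPullback θ h)) y|
      ≤ D * ((1 + r) * ‖X‖) * ((1 + r) * ‖Y‖) :=
    (abs_dirDeriv_dirDeriv_le (contDiff_gnomonicPullback θ hh) hpos hle η ζ).trans (by gcongr)
  calc |shess n θ h (gnomonic θ y) X Y|
      ≤ r * |dirDeriv η (dirDeriv ζ (gnomonicPullback θ h)) y|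
          + |h (gnomonic θ y)| * |⟪X, Y⟫| := by
        rw [hshess, ← abs_mul, ← abs_of_pos hr0, ← abs_mul, abs_of_pos hr0]
        exact abs_sub _ _
    _ ≤ r * (D * ((1 + r) * ‖X‖) * ((1 + r) * ‖Y‖)) + K₂ * (‖X‖ * ‖Y‖) :=
        add_le_add (mul_le_mul_of_nonneg_left hcross hr0.le)
          (mul_le_mul hhK (abs_real_inner_le_norm X Y) (abs_nonneg _) ((abs_nonneg _).trans hhK))
    _ = (r * (1 + r) ^ 2 * D + K₂) * ‖X‖ * ‖Y‖ := by ring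
    _ ≤ ((cos θ)⁻¹ * (1 + (cos θ)⁻¹) ^ 2 * D + K₂) * ‖X‖ * ‖Y‖ := by gcongr

lemma hess_gnomonicPullback_nonneg (hh : ContDiff ℝ ∞ h) (hθ : θ ∈ Ioo 0 (π / 2))
    (hconv : IsConvexSol n θ h) (hy : ‖y‖ ≤ tan θ) (ζ : Hyperplane n) :
    0 ≤ dirDeriv ζ (dirDeriv ζ (gnomonicPullback θ h)) y := by
  rcases eq_or_ne ζ 0 with rfl | hζ
  · simp [dirDeriv]
  · exact (hess_gnomonicPullback_pos hh hθ hconv hy hζ).le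

/-- The constants of the Robin problem in the gnomonic chart, for a capillary solution with
`m₂ ≤ h`, `‖h‖_{C⁰} ≤ K₂` and data `m₁ ≤ f`, `‖f‖_{C²} ≤ K₁`. -/
def capillaryBallData (n : ℕ) (p q : ℝ) (hθ : θ ∈ Ioo 0 (π / 2)) (hm₁ : 0 < m₁) (hm₂ : 0 < m₂)
    (hK₁ : 0 ≤ K₁) (hK₂ : 0 < K₂) : RobinBallData where
  dim := n
  R := tan θ
  m := m₂
  K := (cos θ)⁻¹ * K₂
  B := 2 * K₁ / m₁ + (2 * K₁ / m₁) ^ 2 + |((n : ℝ) + 2 + p) / 2| * 3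
  P := p - 1
  γ := ((n : ℝ) + 1 - q) / 2
  R_pos := Real.tan_pos_of_pos_of_lt_pi_div_two hθ.1 hθ.2
  m_pos := hm₂
  K_pos := mul_pos (inv_pos.2 (cos_pos_of_acute hθ)) hK₂
  B_nonneg := by positivity

lemma robinBallSolution_gnomonicPullback (hθ : θ ∈ Ioo 0 (π / 2)) (hm₁ : 0 < m₁) (hm₂ : 0 < m₂)
    (hK₁ : 0 ≤ K₁) (hK₂ : 0 < K₂) (hf : ContDiff ℝ ∞ f) (hfm : ∀ ξ ∈ cap n θ, m₁ ≤ f ξ)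
    (hfK : CTwoNormLe n θ f K₁) (hh : ContDiff ℝ ∞ h) (hhm : ∀ ξ ∈ cap n θ, m₂ ≤ h ξ)
    (hhK : CZeroNormLe n θ h K₂) (hconv : IsConvexSol n θ h) (heq : SolvesEq n θ p q f h)
    (hbc : RobinBC n θ h) :
    RobinBallSolution (capillaryBallData n p q hθ hm₁ hm₂ hK₁ hK₂) (gnomonicPullback θ h)
      (flatInhomogeneity θ p f) := by
  have hIcc (y : Hyperplane n) (hy : ‖y‖ ≤ tan θ) :=
    gnomonicPullback_mem_Icc hθ hm₂.le hhm (fun ξ hξ => (le_abs_self _).trans (hhK ξ hξ)) hy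
  exact
    { contDiff := contDiff_gnomonicPullback θ hh
      lower := fun y hy => (hIcc y hy).1
      upper := fun y hy => (hIcc y hy).2
      hess_pos := fun y hy ζ hζ => hess_gnomonicPullback_pos hh hθ hconv hy hζ
      robin := fun y hy => dirDeriv_gnomonicPullback_of_robinBC hh hθ hbc hy
      jet := fun y hy => hasTwoJetBound_flatInhomogeneity hm₁ p hf hfm hfK
        ((gnomonic_mem_cap_iff hθ).2 hy.le)
      equation := fun v y hy => solvesLogDetEqNear_gnomonicPullback hθ hh
        (fun ξ hξ => hm₁.trans_le (hfm ξ hξ)) (fun ξ hξ => hm₂.trans_le (hhm ξ hξ)) heq v hy }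

/-- The boundary maximum of `|∇²h(μ, μ)|`. -/
def doubleNormalSup (n : ℕ) (θ : ℝ) (h : Euc n → ℝ) : ℝ :=
  sSup ((fun η => |shess n θ h η (conormal n θ η) (conormal n θ η)|) '' capBdry n θ)

lemma doubleNormalSup_nonneg (n : ℕ) (θ : ℝ) (h : Euc n → ℝ) : 0 ≤ doubleNormalSup n θ h := by
  refine Real.sSup_nonneg ?_
  rintro _ ⟨η, -, rfl⟩
  exact abs_nonneg _

lemma hess_gnomonicPullback_position_le (hθ : θ ∈ Ioo 0 (π / 2)) (hh : ContDiff ℝ ∞ h)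
    (hhK : CZeroNormLe n θ h K₂) (hK₂ : 0 ≤ K₂) (hy : ‖y‖ = tan θ) :
    dirDeriv y (dirDeriv y (gnomonicPullback θ h)) y
      ≤ (doubleNormalSup n θ h + K₂) * tan θ ^ 2 := by
  have hc := cos_pos_of_acute hθ
  have hsup : shess n θ h (gnomonic θ y) (conormal n θ (gnomonic θ y))
      (conormal n θ (gnomonic θ y)) ≤ doubleNormalSup n θ h :=
    (le_abs_self _).trans (le_csSup (bddAbove_abs_shess_conormal θ hh)
      ⟨_, gnomonic_mem_capBdry hc hy, rfl⟩)
  have hzero : h (gnomonic θ y) ≤ K₂ :=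
    (le_abs_self _).trans (hhK _ ((gnomonic_mem_cap_iff hθ).2 hy.le))
  have htrig : cos θ * sin θ ^ 2 ≤ tan θ ^ 2 := by
    rw [Real.tan_eq_sin_div_cos, div_pow, le_div_iff₀ (by positivity)]
    calc cos θ * sin θ ^ 2 * cos θ ^ 2 = cos θ ^ 3 * sin θ ^ 2 := by ring
      _ ≤ sin θ ^ 2 := mul_le_of_le_one_left (sq_nonneg _) (pow_le_one₀ hc.le (cos_le_one θ))
  have hnonneg := add_nonneg (doubleNormalSup_nonneg n θ h) hK₂
  rw [hess_gnomonicPullback_position hh hθ hy]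
  calc _ ≤ cos θ * sin θ ^ 2 * (doubleNormalSup n θ h + K₂) := by gcongr
    _ ≤ tan θ ^ 2 * (doubleNormalSup n θ h + K₂) := by gcongr
    _ = (doubleNormalSup n θ h + K₂) * tan θ ^ 2 := mul_comm _ _

lemma hess_gnomonicPullback_le (hn : 1 ≤ n) (hθ : θ ∈ Ioo 0 (π / 2)) (hm₁ : 0 < m₁) (hm₂ : 0 < m₂)
    (hK₁ : 0 ≤ K₁) (hK₂ : 0 < K₂) (hf : ContDiff ℝ ∞ f) (hfm : ∀ ξ ∈ cap n θ, m₁ ≤ f ξ)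
    (hfK : CTwoNormLe n θ f K₁) (hh : ContDiff ℝ ∞ h) (hhm : ∀ ξ ∈ cap n θ, m₂ ≤ h ξ)
    (hhK : CZeroNormLe n θ h K₂) (hconv : IsConvexSol n θ h) (heq : SolvesEq n θ p q f h)
    (hbc : RobinBC n θ h) (hy : ‖y‖ ≤ tan θ) (ζ : Hyperplane n) :
    dirDeriv ζ (dirDeriv ζ (gnomonicPullback θ h)) y
      ≤ (capillaryBallData n p q hθ hm₁ hm₂ hK₁ hK₂).hessBound
        * (1 + (doubleNormalSup n θ h + K₂)) * ‖ζ‖ ^ 2 := by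
  have : Nontrivial (Hyperplane n) := Module.nontrivial_of_finrank_pos (R := ℝ) (by
    rwa [finrank_hyperplane])
  have hsol := robinBallSolution_gnomonicPullback hθ hm₁ hm₂ hK₁ hK₂ hf hfm hfK hh hhm hhK hconv
    heq hbc
  have hbdry (z : Hyperplane n) (hz : ‖z‖ = (capillaryBallData n p q hθ hm₁ hm₂ hK₁ hK₂).R) :
      dirDeriv z (dirDeriv z (gnomonicPullback θ h)) z ≤ (doubleNormalSup n θ h + K₂)
        * (capillaryBallData n p q hθ hm₁ hm₂ hK₁ hK₂).R ^ 2 :=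
    hess_gnomonicPullback_position_le hθ hh hhK hK₂.le hz
  exact hsol.hess_le (M := doubleNormalSup n θ h + K₂) (finrank_hyperplane (n := n))
    (add_nonneg (doubleNormalSup_nonneg n θ h) hK₂.le) hbdry hy ζ

end Transfer

theorem C2_estimate_reduction_to_double_normal_general
    (n : ℕ) (hn : 1 ≤ n) (θ p q : ℝ) (hθ : θ ∈ Ioo 0 (π / 2)) (m₁ m₂ K₁ K₂ : ℝ)
    (hm₁ : 0 < m₁) (hm₂ : 0 < m₂) :
    ∃ C : ℝ, 0 < C ∧
      ∀ f h : Euc n → ℝ,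
        ContDiff ℝ ∞ f → (∀ ξ ∈ cap n θ, m₁ ≤ f ξ) → CTwoNormLe n θ f K₁ →
        ContDiff ℝ ∞ h → (∀ ξ ∈ cap n θ, m₂ ≤ h ξ) → CZeroNormLe n θ h K₂ →
        IsConvexSol n θ h → SolvesEq n θ p q f h → RobinBC n θ h →
        ∀ ξ ∈ cap n θ, ∀ X Y : Euc n, IsTangent n θ ξ X → IsTangent n θ ξ Y →
          |shess n θ h ξ X Y| ≤ (C * doubleNormalSup n θ h + C) * ‖X‖ * ‖Y‖ := by
  have hL : 0 < |K₂| + 1 := by positivity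
  have hH := (capillaryBallData n p q hθ hm₁ hm₂ (abs_nonneg K₁) hL).hessBound_pos
  have hc := cos_pos_of_acute hθ
  set L := |K₂| + 1
  set H := (capillaryBallData n p q hθ hm₁ hm₂ (abs_nonneg K₁) hL).hessBound
  set Λ := (cos θ)⁻¹ * (1 + (cos θ)⁻¹) ^ 2 * H with hΛ
  refine ⟨Λ * (1 + L) + L, by positivity,
    fun f h hf hfm hfK hh hhm hhK hconv heq hbc ξ hξ X Y hX hY => ?_⟩
  obtain ⟨y, hy, rfl⟩ := exists_gnomonic_eq hθ hξ
  have hhL : CZeroNormLe n θ h L := fun η hη =>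
    (hhK η hη).trans ((le_abs_self K₂).trans (le_add_of_nonneg_right zero_le_one))
  have hS := doubleNormalSup_nonneg n θ h
  set S := doubleNormalSup n θ h
  have hle := hess_gnomonicPullback_le hn hθ hm₁ hm₂ (abs_nonneg K₁) hL hf hfm
    (hfK.mono (le_abs_self K₁)) hh hhm hhL hconv heq hbc hy
  have hconst : (cos θ)⁻¹ * (1 + (cos θ)⁻¹) ^ 2 * (H * (1 + (S + L))) + L
      ≤ (Λ * (1 + L) + L) * S + (Λ * (1 + L) + L) := by
    rw [← mul_assoc, ← hΛ]
    have : 0 ≤ (Λ + 1) * L * S := by positivity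
    linarith
  exact (abs_shess_le_of_hess_gnomonicPullback_le hθ hh (hhL _ hξ) (by positivity) hy
    (hess_gnomonicPullback_nonneg hh hθ hconv hy) hle hX hY).trans (by gcongr)

/-- Lemma 4.1, Step 1: reduction of the global Hessian bound to the
boundary double normal estimate:
`max_{C_θ} |∇²h| ≤ C·max_{∂C_θ}|∇²h(μ,μ)| + C`, with `C` depending only on `n`, `p`, `q`,
lower bounds for `f` and `h`, `‖f‖_{C²(C_θ)}` and `‖h‖_{C⁰(C_θ)}`. -/
theorem C2_estimate_reduction_to_double_normal
    (n : ℕ) (hn : 1 ≤ n) (θ p q : ℝ) (hθ : θ ∈ Set.Ioo 0 (π / 2)) (hpq : q < p)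
    (m₁ m₂ K₁ K₂ : ℝ) (hm₁ : 0 < m₁) (hm₂ : 0 < m₂) :
    ∃ C : ℝ, 0 < C ∧
      ∀ f h : Euc n → ℝ,
        ContDiff ℝ (⊤ : ℕ∞) f → (∀ ξ ∈ cap n θ, 0 < f ξ) →
        (∀ ξ ∈ cap n θ, m₁ ≤ f ξ) → CTwoNormLe n θ f K₁ →
        ContDiff ℝ (⊤ : ℕ∞) h → PosOnCap n θ h →
        (∀ ξ ∈ cap n θ, m₂ ≤ h ξ) → CZeroNormLe n θ h K₂ →
        IsConvexSol n θ h → SolvesEq n θ p q f h → RobinBC n θ h →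
        ∀ ξ ∈ cap n θ, ∀ X Y : Euc n, IsTangent n θ ξ X → IsTangent n θ ξ Y →
          |shess n θ h ξ X Y| ≤
            (C * sSup ((fun η => |shess n θ h η (conormal n θ η) (conormal n θ η)|) ''
                capBdry n θ) + C) * ‖X‖ * ‖Y‖ := by
  obtain ⟨C, hC, hbound⟩ :=
    C2_estimate_reduction_to_double_normal_general n hn θ p q hθ m₁ m₂ K₁ K₂ hm₁ hm₂
  exact ⟨C, hC, fun f h hf _ hfm hfK hh _ => hbound f h hf hfm hfK hh⟩
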